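/- arXiv:1003.2699 — 2 statements merged into one kernel-verified Lean document; each statement's English description precedes it below -/
import Mathlib

section
/- (Bottom layer j = 0) Assume the integrality condition on (μ,ν) and let ϑ, φ ∈ (0,π) with cos ϑ + cos φ > 0. Then ∫₀^∞ K_{ν/2}(x) J_{μ/2}(x sin ϑ/(cos ϑ + cos φ)) J_{ν/2}(x sin φ/(cos ϑ + cos φ)) x^{(μ+2)/2} dx = (2^{(ν−2)/2} Γ((μ−ν+2)/2)/√π) · (cos ϑ + cos φ) · (sin ϑ)^{μ/2} (sin φ)^{ν/2} · C̃_{(μ−ν)/2}^{(ν+1)/2}(cos φ). -/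
open MeasureTheory Real Filter Set Metric

noncomputable section

/-- Normalized Bessel function of the first kind: `J̃_α(x) = (x/2)^{-α} J_α(x)`,
given by its (entire) power series. -/
def besselJt (α x : ℝ) : ℝ :=
  ∑' m : ℕ, (-1) ^ m / (m.factorial * Real.Gamma (m + α + 1)) * (x / 2) ^ (2 * m)

/-- Bessel function of the first kind `J_α`. -/
def besselJ (α x : ℝ) : ℝ :=
  ∑' m : ℕ, (-1) ^ m / (m.factorial * Real.Gamma (m + α + 1)) * (x / 2) ^ (2 * (m : ℝ) + α)

/-- Normalized modified Bessel function `Ĩ_α(x) = (x/2)^{-α} I_α(x)`,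
given by its (entire, even) power series. -/
def besselIt (α x : ℝ) : ℝ :=
  ∑' m : ℕ, (x / 2) ^ (2 * m) / (m.factorial * Real.Gamma (m + α + 1))

/-- Modified Bessel function of the first kind `I_α`. -/
def besselI (α x : ℝ) : ℝ :=
  ∑' m : ℕ, (x / 2) ^ (2 * (m : ℝ) + α) / (m.factorial * Real.Gamma (m + α + 1))

/-- Modified Bessel function of the second kind,
`K_α(x) = lim_{β→α} (π/2)(I_{−β}(x) − I_β(x))/sin(βπ)`. -/
def besselK (α x : ℝ) : ℝ :=
  limUnder (nhdsWithin α {α}ᶜ) fun β =>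
    Real.pi / 2 * (besselI (-β) x - besselI β x) / Real.sin (β * Real.pi)

/-- Normalized K-Bessel function `K̃_α(x) = (x/2)^{-α} K_α(x)`. -/
def besselKt (α x : ℝ) : ℝ := (x / 2) ^ (-α) * besselK α x

/-- Normalized Gegenbauer polynomial `C̃_n^λ = Γ(λ) C_n^λ`, where `C_n^λ` is defined via the
generating function `(1 − 2xt + t²)^{−λ} = Σ_{n≥0} C_n^λ(x) tⁿ`; explicitly,
`C̃_n^λ(x) = Σ_{k=0}^{⌊n/2⌋} (−1)^k Γ(λ+n−k)/(k!(n−2k)!) (2x)^{n−2k}`.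
This expression also gives the limit value `C̃_n^0 = lim_{λ→0+} Γ(λ) C_n^λ` for `n ≥ 1`. -/
def gegenbauerCt (n : ℕ) (l x : ℝ) : ℝ :=
  ∑ k ∈ Finset.range (n / 2 + 1),
    (-1) ^ k * Real.Gamma (l + n - k) / (k.factorial * (n - 2 * k).factorial)
      * (2 * x) ^ (n - 2 * k)

/-- Laguerre polynomial `L_n^μ(x) = Σ_{k=0}^n (−1)^k binom(n+μ, n−k) x^k/k!`
(with nonnegative integer parameter `μ`). -/
def laguerreL (n μ : ℕ) (x : ℝ) : ℝ :=
  ∑ k ∈ Finset.range (n + 1),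
    (-1) ^ k * (Nat.choose (n + μ) (n - k)) * x ^ k / k.factorial

/-- The Euler operator `θ = x d/dx`. -/
def eulerOp (u : ℝ → ℝ) : ℝ → ℝ := fun x => x * deriv u x

/-- `(θ+c)(θ+c+ν)u − x² u`, i.e. the operator `Q_ν(θ+c)` applied to `u`. -/
def besselQ (ν c : ℝ) (u : ℝ → ℝ) : ℝ → ℝ := fun x =>
  eulerOp (fun y => eulerOp u y + (c + ν) * u y) x
    + c * (eulerOp u x + (c + ν) * u x) - x ^ 2 * u x

/-- The fourth order differential operator
`D_{μ,ν} = x^{−2}((θ+μ)(θ+μ+ν) − x²)(θ(θ+ν) − x²)`. -/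
def Dop (μ ν : ℝ) (u : ℝ → ℝ) : ℝ → ℝ := fun x =>
  besselQ ν μ (besselQ ν 0 u) x / x ^ 2

/-- The generating function
`G^{μ,ν}(t,x) = (1−t)^{−(μ+ν+2)/2} Ĩ_{μ/2}(tx/(1−t)) K̃_{ν/2}(x/(1−t))`. -/
def genFun (μ ν t x : ℝ) : ℝ :=
  (1 - t) ^ (-(μ + ν + 2) / 2) * besselIt (μ / 2) (t * x / (1 - t))
    * besselKt (ν / 2) (x / (1 - t))

/-- The eigenfunctions `Λ_j^{μ,ν}`, defined as the Taylor coefficients in `t` at `t = 0` of the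
generating function `G^{μ,ν}(t,x) = Σ_{j≥0} Λ_j^{μ,ν}(x) t^j`. -/
def LambdaF (μ ν : ℝ) (j : ℕ) (x : ℝ) : ℝ :=
  iteratedDeriv j (fun t => genFun μ ν t x) 0 / j.factorial

/-- The integrality condition: `μ ≥ ν ≥ −1` are integers of the same parity,
not both equal to `−1`. -/
def IntCond (μ ν : ℤ) : Prop :=
  -1 ≤ ν ∧ ν ≤ μ ∧ Even (μ - ν) ∧ ¬(μ = -1 ∧ ν = -1)

end

/-!
Put `α = ν / 2` and `μ = ν + 2n`. In the variable `z = x² / 4` the integral becomes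
`Φ_β(r, s) = ∫₀^∞ h_α(z) z^β C_α(-rz) C_β(-sz) dz` with `β = α + n`, where `C_α` is the entire
Bessel–Clifford function and `h_α(z) = ∫₀^∞ e^(-t - z/t) t^(α-1) dt` represents `K_α`. Since
`C_β' = C_(β+1)`, differentiating in `s` raises `β` by one: `∂Φ_β/∂s = -Φ_(β+1)`. Inserting the
integral for `h_α` and using Weber's second exponential integral turns the cases `n = 0` and `n = 1`
into Laplace transforms of Bessel functions, which are binomial series in
`Q = (s + 1 - r)² + 4r`; for `α = -1/2` the case `n = 0` diverges, so the induction on `n` starts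
at `n = 1`. The iterated derivatives of `Q^(-α - 1/2)` are homogenised Gegenbauer polynomials, and
for `s = (sin ϑ / c)²`, `r = (sin φ / c)²`, `c = cos ϑ + cos φ` one finds `Q = (2 / c)²` and
`s + 1 - r = 2 cos φ / c`.
-/

noncomputable section

open scoped Topology

/-! ### The Bessel–Clifford function -/

/-- The Bessel–Clifford function `C_α(w) = Σ wᵐ / (m! Γ(m + α + 1))`, the entire function behind
both kinds of Bessel functions: `J_α(y) = (y/2)^α C_α(-y²/4)` and `I_α(y) = (y/2)^α C_α(y²/4)`.
At the poles of `Γ` the convention `1 / 0 = 0` is the correct value of `1 / Γ`. -/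
def besselClifford (α w : ℝ) : ℝ := ∑' m : ℕ, w ^ m / (m.factorial * Gamma (m + α + 1))

lemma inv_Gamma_eq_self_mul_inv_Gamma_add_one (x : ℝ) : (Gamma x)⁻¹ = x * (Gamma (x + 1))⁻¹ := by
  rcases eq_or_ne x 0 with rfl | hx
  · simp
  · rw [Gamma_add_one hx, mul_inv, mul_inv_cancel_left₀ hx]

lemma exists_abs_inv_Gamma_natCast_add_le (a : ℝ) : ∃ B, ∀ m : ℕ, |(Gamma (m + a))⁻¹| ≤ B := by
  have eventually_le_one : ∀ᶠ m : ℕ in atTop, |(Gamma (m + a))⁻¹| ≤ 1 := by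
    filter_upwards [tendsto_natCast_atTop_atTop.eventually_ge_atTop (2 - a)] with m hm
    have two_le : 2 ≤ m + a := by linarith
    have one_le : 1 ≤ Gamma (m + a) :=
      Gamma_two ▸ Gamma_strictMonoOn_Ici.monotoneOn self_mem_Ici two_le two_le
    rw [abs_of_pos (by positivity)]
    exact inv_le_one_of_one_le₀ one_le
  obtain ⟨B, hB⟩ :=
    (isBoundedUnder_of_eventually_le eventually_le_one).bddAbove_range
  exact ⟨B, fun m => hB (mem_range_self m)⟩

lemma exists_norm_besselClifford_term_le (α : ℝ) : ∃ B, ∀ (m : ℕ) (w R : ℝ), |w| ≤ R →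
    ‖w ^ m / (m.factorial * Gamma (m + α + 1))‖ ≤ B * (R ^ m / m.factorial) := by
  obtain ⟨B, hB⟩ := exists_abs_inv_Gamma_natCast_add_le (α + 1)
  refine ⟨B, fun m w R hw => ?_⟩
  rw [add_assoc, div_mul_eq_div_mul_one_div, one_div, mul_comm, norm_mul, norm_div, norm_pow,
    norm_natCast, norm_eq_abs, norm_eq_abs]
  have hB_nonneg : 0 ≤ B := (abs_nonneg _).trans (hB 0)
  gcongr
  exact hB m

lemma hasSum_besselClifford (α w : ℝ) :
    HasSum (fun m : ℕ => w ^ m / (m.factorial * Gamma (m + α + 1))) (besselClifford α w) := by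
  obtain ⟨B, hB⟩ := exists_norm_besselClifford_term_le α
  exact (((summable_pow_div_factorial |w|).mul_left B).of_norm_bounded
    fun m => hB m w |w| le_rfl).hasSum

lemma besselClifford_deriv_term (α w : ℝ) (m : ℕ) :
    (m + 1 : ℕ) * w ^ m / ((m + 1).factorial * Gamma ((m + 1 : ℕ) + α + 1))
      = w ^ m / (m.factorial * Gamma (m + (α + 1) + 1)) := by
  rw [Nat.factorial_succ, Nat.cast_mul, mul_assoc, mul_div_mul_left _ _ (by positivity)]
  push_cast
  ring_nf

lemma hasSum_besselClifford_deriv (α w : ℝ) :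
    HasSum (fun m : ℕ => m * w ^ (m - 1) / (m.factorial * Gamma (m + α + 1)))
      (besselClifford (α + 1) w) := by
  refine (hasSum_nat_add_iff' 1).1 ?_
  simpa only [Finset.sum_range_one, Nat.cast_zero, zero_mul, zero_div, sub_zero,
    Nat.add_sub_cancel, besselClifford_deriv_term] using hasSum_besselClifford (α + 1) w

lemma hasDerivAt_besselClifford (α w : ℝ) :
    HasDerivAt (besselClifford α) (besselClifford (α + 1) w) w := by
  obtain ⟨B, hB⟩ := exists_norm_besselClifford_term_le (α + 1)
  set R := |w| + 1
  have hw : w ∈ ball (0 : ℝ) R := by simp [R]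
  have summable_bound : Summable fun m : ℕ => B * (R ^ (m - 1) / (m - 1).factorial) :=
    (summable_nat_add_iff 1).1 <| by
      simpa only [Nat.add_sub_cancel] using (summable_pow_div_factorial R).mul_left B
  have term_le : ∀ (m : ℕ), ∀ y ∈ ball (0 : ℝ) R,
      ‖m * y ^ (m - 1) / (m.factorial * Gamma (m + α + 1))‖
        ≤ B * (R ^ (m - 1) / (m - 1).factorial) := by
    rintro (_ | m) y hy
    · simpa using (norm_nonneg _).trans (hB 0 0 1 (by simp))
    · rw [Nat.add_sub_cancel, besselClifford_deriv_term]
      exact hB m y R (mem_ball_zero_iff.1 hy).le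
  rw [← (hasSum_besselClifford_deriv α w).tsum_eq]
  exact hasDerivAt_tsum_of_isPreconnected summable_bound isOpen_ball
    (convex_ball (0 : ℝ) R).isPreconnected (fun m y _ => (hasDerivAt_pow m y).div_const _)
    term_le hw (hasSum_besselClifford α w).summable hw

@[fun_prop]
lemma continuous_besselClifford (α : ℝ) : Continuous (besselClifford α) :=
  continuous_iff_continuousAt.2 fun w => (hasDerivAt_besselClifford α w).continuousAt

lemma hasDerivAt_besselClifford_neg_mul (α X z : ℝ) :
    HasDerivAt (fun z => besselClifford α (-(X * z)))
      (-(X * besselClifford (α + 1) (-(X * z)))) z := by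
  refine ((hasDerivAt_besselClifford α (-(X * z))).comp z
    ((hasDerivAt_id z).const_mul X).neg).congr_deriv ?_
  ring

lemma besselClifford_zero (α : ℝ) : besselClifford α 0 = (Gamma (α + 1))⁻¹ := by
  rw [besselClifford, tsum_eq_single 0 fun m hm => by simp [hm]]
  simp

lemma besselClifford_eq_add (α w : ℝ) :
    besselClifford α w = (α + 1) * besselClifford (α + 1) w + w * besselClifford (α + 2) w := by
  have hasSum_rhs := ((hasSum_besselClifford (α + 1) w).mul_left (α + 1)).add
    ((hasSum_besselClifford_deriv (α + 1) w).mul_left w)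
  rw [show α + 1 + 1 = α + 2 by ring] at hasSum_rhs
  refine (hasSum_besselClifford α w).unique (hasSum_rhs.congr_fun fun m => ?_)
  simp only [div_eq_mul_inv, mul_inv, inv_Gamma_eq_self_mul_inv_Gamma_add_one (m + α + 1)]
  rcases m with _ | m
  · simp
  · push_cast
    ring_nf

lemma hasDerivAt_besselClifford_energy (α w : ℝ) :
    HasDerivAt (fun w => besselClifford α w ^ 2 - w * besselClifford (α + 1) w ^ 2)
      ((2 * α + 1) * besselClifford (α + 1) w ^ 2) w := by
  refine (((hasDerivAt_besselClifford α w).pow 2).sub ((hasDerivAt_id' w).mul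
    ((hasDerivAt_besselClifford (α + 1) w).pow 2))).congr_deriv ?_
  rw [besselClifford_eq_add α w, show α + 1 + 1 = α + 2 by ring]
  simp only [Pi.pow_apply]
  push_cast
  ring

lemma abs_besselClifford_le {α w : ℝ} (hα : -1 / 2 ≤ α) (hw : w ≤ 0) :
    |besselClifford α w| ≤ (Gamma (α + 1))⁻¹ := by
  have Gamma_pos : 0 < Gamma (α + 1) := Gamma_pos_of_pos (by linarith)
  have energy_monotone :
      Monotone fun w => besselClifford α w ^ 2 - w * besselClifford (α + 1) w ^ 2 :=
    monotone_of_hasDerivAt_nonneg (hasDerivAt_besselClifford_energy α) fun w =>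
      mul_nonneg (by linarith) (sq_nonneg _)
  have energy_le := energy_monotone hw
  simp only [zero_mul, sub_zero, besselClifford_zero] at energy_le
  refine abs_le_of_sq_le_sq (le_trans ?_ energy_le) (by positivity)
  linarith [mul_nonneg (neg_nonneg.2 hw) (sq_nonneg (besselClifford (α + 1) w))]

lemma besselJ_eq_besselClifford {α y : ℝ} (hy : 0 < y) :
    besselJ α y = (y / 2) ^ α * besselClifford α (-(y ^ 2 / 4)) := by
  rw [besselJ, besselClifford, ← tsum_mul_left]
  congr 1 with m
  rw [rpow_add (by positivity), ← Nat.cast_ofNat, ← Nat.cast_mul, rpow_natCast, pow_mul,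
    neg_pow (y ^ 2 / 4)]
  ring

lemma besselI_eq_besselClifford {α y : ℝ} (hy : 0 < y) :
    besselI α y = (y / 2) ^ α * besselClifford α (y ^ 2 / 4) := by
  rw [besselI, besselClifford, ← tsum_mul_left]
  congr 1 with m
  rw [rpow_add (by positivity), ← Nat.cast_ofNat, ← Nat.cast_mul, rpow_natCast, pow_mul]
  ring

lemma besselClifford_wronskian (β w : ℝ) :
    besselClifford (-β) w * besselClifford (β - 1) w
      - w * (besselClifford β w * besselClifford (1 - β) w) = sin (π * β) / π := by
  have hasDerivAt_zero (w : ℝ) : HasDerivAt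
      (fun w => besselClifford (-β) w * besselClifford (β - 1) w
        - w * (besselClifford β w * besselClifford (1 - β) w)) 0 w := by
    refine (((hasDerivAt_besselClifford (-β) w).mul (hasDerivAt_besselClifford (β - 1) w)).sub
      ((hasDerivAt_id' w).mul ((hasDerivAt_besselClifford β w).mul
        (hasDerivAt_besselClifford (1 - β) w)))).congr_deriv ?_
    rw [besselClifford_eq_add (-β), besselClifford_eq_add (β - 1)]
    simp only [Pi.mul_apply]
    ring_nf
  rw [is_const_of_deriv_eq_zero (fun w => (hasDerivAt_zero w).differentiableAt)
    (fun w => (hasDerivAt_zero w).deriv) w 0]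
  simp only [besselClifford_zero, zero_mul, sub_zero, sub_add_cancel]
  rw [← mul_inv, mul_comm, neg_add_eq_sub, Gamma_mul_Gamma_one_sub, inv_div]

/-! ### The Macdonald function -/

/-- The integrand `e^(-t - z/t) t^(β-1)` of the integral representation of `K_β`. -/
def macdonaldKernel (β z t : ℝ) : ℝ := exp (-t - z / t) * t ^ (β - 1)

/-- The function `h_β(z) = ∫₀^∞ e^(-t - z/t) t^(β-1) dt` with `K_β(x) = ½ (x/2)^(-β) h_β(x²/4)`. -/
def macdonaldIntegral (β z : ℝ) : ℝ := ∫ t in Ioi 0, macdonaldKernel β z t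

lemma macdonaldKernel_nonneg (β z : ℝ) {t : ℝ} (ht : 0 < t) : 0 ≤ macdonaldKernel β z t := by
  unfold macdonaldKernel
  positivity

lemma aestronglyMeasurable_macdonaldKernel (β z : ℝ) (μ : Measure ℝ) :
    AEStronglyMeasurable (macdonaldKernel β z) μ :=
  Measurable.aestronglyMeasurable (by unfold macdonaldKernel; fun_prop)

lemma macdonaldKernel_zero (β t : ℝ) : macdonaldKernel β 0 t = exp (-t) * t ^ (β - 1) := by
  simp [macdonaldKernel]

lemma macdonaldKernel_le_of_le (β : ℝ) {z z' t : ℝ} (ht : 0 < t) (h : z ≤ z') :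
    macdonaldKernel β z' t ≤ macdonaldKernel β z t := by
  unfold macdonaldKernel
  gcongr

lemma macdonaldKernel_le (β : ℝ) {z t : ℝ} (k : ℕ) (hz : 0 < z) (ht : 0 < t) :
    macdonaldKernel β z t ≤ k.factorial / z ^ k * (exp (-t) * t ^ (β + k - 1)) := by
  have exp_neg_div_le : exp (-(z / t)) ≤ k.factorial * t ^ k / z ^ k := by
    rw [exp_neg, inv_le_comm₀ (exp_pos _) (by positivity)]
    calc (k.factorial * t ^ k / z ^ k : ℝ)⁻¹ = (z / t) ^ k / k.factorial := by
          rw [inv_div, div_pow, div_div, mul_comm (t ^ k)]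
      _ ≤ exp (z / t) := pow_div_factorial_le_exp _ (by positivity) k
  calc macdonaldKernel β z t = exp (-t) * t ^ (β - 1) * exp (-(z / t)) := by
        rw [macdonaldKernel, sub_eq_add_neg, exp_add]
        ring
    _ ≤ exp (-t) * t ^ (β - 1) * (k.factorial * t ^ k / z ^ k) := by gcongr
    _ = k.factorial / z ^ k * (exp (-t) * t ^ (β + k - 1)) := by
        rw [show β + (k : ℝ) - 1 = β - 1 + k by ring, rpow_add ht, rpow_natCast]
        ring

lemma integrableOn_macdonaldKernel (β : ℝ) {z : ℝ} (hz : 0 < z) :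
    IntegrableOn (macdonaldKernel β z) (Ioi 0) := by
  obtain ⟨k, hk⟩ := exists_nat_gt (-β)
  refine ((GammaIntegral_convergent (s := β + k) (by linarith)).const_mul
    (k.factorial / z ^ k)).mono' (aestronglyMeasurable_macdonaldKernel β z _) ?_
  filter_upwards [ae_restrict_mem measurableSet_Ioi] with t ht
  rw [norm_of_nonneg (macdonaldKernel_nonneg β z ht)]
  exact macdonaldKernel_le β k hz ht

lemma hasDerivAt_macdonaldKernel (β z : ℝ) {t : ℝ} (ht : 0 < t) :
    HasDerivAt (fun z => macdonaldKernel β z t) (-macdonaldKernel (β - 1) z t) z := by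
  refine ((((hasDerivAt_id' z).div_const t).const_sub (-t)).exp.mul_const
    (t ^ (β - 1))).congr_deriv ?_
  rw [macdonaldKernel, rpow_sub_one ht.ne' (β - 1)]
  ring

lemma hasDerivAt_macdonaldIntegral (β : ℝ) {z : ℝ} (hz : 0 < z) :
    HasDerivAt (macdonaldIntegral β) (-macdonaldIntegral (β - 1) z) z := by
  rw [macdonaldIntegral, ← integral_neg]
  refine (hasDerivAt_integral_of_dominated_loc_of_deriv_le (s := Ioi (z / 2))
    (F' := fun z t => -macdonaldKernel (β - 1) z t)
    (bound := macdonaldKernel (β - 1) (z / 2)) (Ioi_mem_nhds (half_lt_self hz))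
    (Eventually.of_forall fun z => aestronglyMeasurable_macdonaldKernel β z _)
    (integrableOn_macdonaldKernel β hz) (aestronglyMeasurable_macdonaldKernel _ z _).neg ?_
    (integrableOn_macdonaldKernel (β - 1) (half_pos hz)) ?_).2
  · filter_upwards [ae_restrict_mem measurableSet_Ioi] with t ht y hy
    rw [norm_neg, norm_of_nonneg (macdonaldKernel_nonneg _ _ ht)]
    exact macdonaldKernel_le_of_le _ ht (le_of_lt hy)
  · filter_upwards [ae_restrict_mem measurableSet_Ioi] with t ht y _
    exact hasDerivAt_macdonaldKernel β y ht

lemma tendsto_macdonaldIntegral_nhdsGT_zero {β : ℝ} (hβ : 0 < β) :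
    Tendsto (macdonaldIntegral β) (𝓝[>] 0) (𝓝 (Gamma β)) := by
  rw [Gamma_eq_integral hβ]
  refine tendsto_integral_filter_of_dominated_convergence (fun t => exp (-t) * t ^ (β - 1))
    (Eventually.of_forall fun z => aestronglyMeasurable_macdonaldKernel β z _) ?_
    (GammaIntegral_convergent hβ) ?_
  · filter_upwards [self_mem_nhdsWithin] with z hz
    filter_upwards [ae_restrict_mem measurableSet_Ioi] with t ht
    rw [norm_of_nonneg (macdonaldKernel_nonneg _ _ ht), ← macdonaldKernel_zero]
    exact macdonaldKernel_le_of_le β ht (le_of_lt hz)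
  · filter_upwards [ae_restrict_mem measurableSet_Ioi] with t ht
    rw [← macdonaldKernel_zero]
    exact (hasDerivAt_macdonaldKernel β 0 ht).continuousAt.tendsto.mono_left nhdsWithin_le_nhds

lemma image_const_div_Ioi {z : ℝ} (hz : 0 < z) : (z / ·) '' Ioi 0 = Ioi 0 :=
  Subset.antisymm (image_subset_iff.2 fun _ ht => div_pos hz ht)
    fun t ht => ⟨z / t, div_pos hz ht, div_div_cancel₀ hz.ne'⟩

lemma macdonaldIntegral_neg (β : ℝ) {z : ℝ} (hz : 0 < z) :
    macdonaldIntegral (-β) z = z ^ (-β) * macdonaldIntegral β z := by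
  rw [macdonaldIntegral, ← image_const_div_Ioi hz, integral_image_eq_integral_abs_deriv_smul
      measurableSet_Ioi (f' := fun t => -z / t ^ 2) _ _, macdonaldIntegral, ← integral_const_mul]
  · refine setIntegral_congr_fun measurableSet_Ioi fun t (ht : 0 < t) => ?_
    simp only [macdonaldKernel, smul_eq_mul, abs_div, abs_neg, abs_of_pos hz,
      abs_of_pos (pow_pos ht 2), div_div_cancel₀ hz.ne']
    rw [div_rpow hz.le ht.le, rpow_sub_one hz.ne', show -β - 1 = -(β - 1) - 2 by ring,
      rpow_sub ht, rpow_neg ht.le, rpow_two, neg_sub_comm]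
    field_simp
  · intro t (ht : 0 < t)
    refine (((hasDerivAt_inv ht.ne').const_mul z).congr_deriv ?_).hasDerivWithinAt
    ring
  · exact (Function.LeftInverse.injective (g := (z / ·)) fun _ => div_div_cancel₀ hz.ne').injOn

lemma macdonaldIntegral_eq_rpow_mul (β : ℝ) {z : ℝ} (hz : 0 < z) :
    macdonaldIntegral β z = z ^ β * macdonaldIntegral (-β) z := by
  simpa only [neg_neg] using macdonaldIntegral_neg (-β) hz

lemma macdonaldIntegral_add_one (β : ℝ) {z : ℝ} (hz : 0 < z) :
    macdonaldIntegral (β + 1) z = z * macdonaldIntegral (β - 1) z + β * macdonaldIntegral β z := by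
  have deriv_eq := (hasDerivAt_macdonaldIntegral β hz).unique <|
    ((hasDerivAt_rpow_const (Or.inl hz.ne')).mul
      (hasDerivAt_macdonaldIntegral (-β) hz)).congr_of_eventuallyEq <|
        (eventually_gt_nhds hz).mono fun y hy => macdonaldIntegral_eq_rpow_mul β hy
  rw [← neg_add', macdonaldIntegral_neg β hz, macdonaldIntegral_neg (β + 1) hz, rpow_sub_one hz.ne',
    rpow_neg hz.le, rpow_neg hz.le, rpow_add_one hz.ne'] at deriv_eq
  have : z ^ β ≠ 0 := (rpow_pos_of_pos hz β).ne'
  field_simp at deriv_eq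
  linarith

lemma continuous_macdonaldIntegral_index {z : ℝ} (hz : 0 < z) :
    Continuous fun β => macdonaldIntegral β z := by
  refine continuous_iff_continuousAt.2 fun α => tendsto_integral_filter_of_dominated_convergence
    (fun t => macdonaldKernel (α - 1) z t + macdonaldKernel (α + 1) z t)
    (Eventually.of_forall fun β => aestronglyMeasurable_macdonaldKernel β z _) ?_
    ((integrableOn_macdonaldKernel _ hz).add (integrableOn_macdonaldKernel _ hz)) ?_
  · filter_upwards [Ioo_mem_nhds (sub_one_lt α) (lt_add_one α)] with β hβ
    filter_upwards [ae_restrict_mem measurableSet_Ioi] with t (ht : 0 < t)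
    have rpow_le : t ^ (β - 1) ≤ t ^ (α - 1 - 1) + t ^ (α + 1 - 1) := by
      rcases le_total t 1 with h | h
      · exact le_add_of_le_of_nonneg
          (rpow_le_rpow_of_exponent_ge ht h (by linarith [hβ.1])) (by positivity)
      · exact le_add_of_nonneg_of_le (by positivity)
          (rpow_le_rpow_of_exponent_le h (by linarith [hβ.2]))
    rw [norm_of_nonneg (macdonaldKernel_nonneg _ _ ht)]
    simp only [macdonaldKernel, ← mul_add]
    gcongr
  · filter_upwards [ae_restrict_mem measurableSet_Ioi] with t (ht : 0 < t)
    exact (((continuous_const_rpow ht.ne').comp (continuous_id.sub continuous_const)).const_mul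
      _).tendsto α

/-! ### The Macdonald function in terms of the Bessel–Clifford function -/

/-- The Wronskian `z C_β(z) h_{β-1}(z) + C_{β-1}(z) h_β(z)` of `I_{β-1}` and `K_{β-1}`, up to a
power of `z`. -/
def macdonaldWronskian (β z : ℝ) : ℝ :=
  z * (besselClifford β z * macdonaldIntegral (β - 1) z)
    + besselClifford (β - 1) z * macdonaldIntegral β z

lemma hasDerivAt_macdonaldWronskian (β : ℝ) {z : ℝ} (hz : 0 < z) :
    HasDerivAt (macdonaldWronskian β) 0 z := by
  refine (((hasDerivAt_id' z).mul ((hasDerivAt_besselClifford β z).mul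
    (hasDerivAt_macdonaldIntegral (β - 1) hz))).add ((hasDerivAt_besselClifford (β - 1) z).mul
      (hasDerivAt_macdonaldIntegral β hz))).congr_deriv ?_
  have macdonald_rec := macdonaldIntegral_add_one (β - 1) hz
  rw [sub_add_cancel] at macdonald_rec
  rw [besselClifford_eq_add (β - 1), macdonald_rec]
  simp only [Pi.mul_apply]
  ring_nf

lemma macdonaldWronskian_eq (β : ℝ) {z w : ℝ} (hz : 0 < z) (hw : 0 < w) :
    macdonaldWronskian β z = macdonaldWronskian β w :=
  isOpen_Ioi.is_const_of_deriv_eq_zero isPreconnected_Ioi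
    (fun _ hx => (hasDerivAt_macdonaldWronskian β hx).differentiableAt.differentiableWithinAt)
    (fun _ hx => (hasDerivAt_macdonaldWronskian β hx).deriv) hz hw

lemma macdonaldWronskian_add_one (β : ℝ) {z : ℝ} (hz : 0 < z) :
    macdonaldWronskian (β + 1) z = macdonaldWronskian β z := by
  rw [macdonaldWronskian, macdonaldWronskian, add_sub_cancel_right,
    macdonaldIntegral_add_one β hz, besselClifford_eq_add (β - 1)]
  ring_nf

lemma macdonaldWronskian_eq_one_of_one_lt {β z : ℝ} (hβ : 1 < β) (hz : 0 < z) :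
    macdonaldWronskian β z = 1 := by
  have tendsto_besselClifford (α : ℝ) :
      Tendsto (besselClifford α) (𝓝[>] 0) (𝓝 (Gamma (α + 1))⁻¹) :=
    besselClifford_zero α ▸
      (continuous_besselClifford α).continuousAt.tendsto.mono_left nhdsWithin_le_nhds
  have tendsto_one : Tendsto (macdonaldWronskian β) (𝓝[>] 0) (𝓝 1) := by
    have := ((tendsto_id.mono_left nhdsWithin_le_nhds).mul ((tendsto_besselClifford β).mul
      (tendsto_macdonaldIntegral_nhdsGT_zero (sub_pos.2 hβ)))).add
        ((tendsto_besselClifford (β - 1)).mul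
          (tendsto_macdonaldIntegral_nhdsGT_zero (one_pos.trans hβ)))
    rwa [zero_mul, zero_add, sub_add_cancel,
      inv_mul_cancel₀ (Gamma_pos_of_pos (one_pos.trans hβ)).ne'] at this
  refine tendsto_nhds_unique (tendsto_const_nhds.congr' ?_) tendsto_one
  filter_upwards [self_mem_nhdsWithin] with w hw using macdonaldWronskian_eq β hz hw

lemma macdonaldWronskian_eq_one (β : ℝ) {z : ℝ} (hz : 0 < z) : macdonaldWronskian β z = 1 := by
  have macdonaldWronskian_add_nat (n : ℕ) :
      macdonaldWronskian (β + n) z = macdonaldWronskian β z := by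
    induction n with
    | zero => simp
    | succ n ih => rw [Nat.cast_succ, ← add_assoc, macdonaldWronskian_add_one _ hz, ih]
  obtain ⟨n, hn⟩ := exists_nat_gt (1 - β)
  rw [← macdonaldWronskian_add_nat n, macdonaldWronskian_eq_one_of_one_lt (by linarith) hz]

/- Eliminate `h_{β-1}` from the two Wronskian relations with indices `β` and `1 - β`. -/
lemma sin_div_pi_mul_macdonaldIntegral (β : ℝ) {z : ℝ} (hz : 0 < z) :
    sin (π * β) / π * macdonaldIntegral β z
      = besselClifford (-β) z - z ^ β * besselClifford β z := by
  have wronskian := macdonaldWronskian_eq_one β hz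
  have wronskian_reflected := macdonaldWronskian_eq_one (1 - β) hz
  rw [macdonaldWronskian] at wronskian wronskian_reflected
  rw [sub_sub_cancel_left, ← neg_sub β, macdonaldIntegral_neg β hz,
    macdonaldIntegral_neg (β - 1) hz, neg_sub, rpow_sub hz, rpow_neg hz.le, rpow_one]
    at wronskian_reflected
  have : z ^ β ≠ 0 := (rpow_pos_of_pos hz β).ne'
  field_simp at wronskian_reflected
  rw [← besselClifford_wronskian β z]
  linear_combination besselClifford (-β) z * wronskian - besselClifford β z * wronskian_reflected

lemma besselK_eq_macdonaldIntegral (α : ℝ) {x : ℝ} (hx : 0 < x) :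
    besselK α x = (x / 2) ^ (-α) * macdonaldIntegral α (x ^ 2 / 4) / 2 := by
  have sin_ne_zero : ∀ᶠ β in 𝓝[≠] α, sin (β * π) ≠ 0 := by
    have hasDerivAt_sin : HasDerivAt (fun β => sin (β * π)) (cos (α * π) * π) α :=
      ((hasDerivAt_mul_const π).sin)
    rcases eq_or_ne (sin (α * π)) 0 with h | h
    · refine hasDerivAt_sin.eventually_ne (mul_ne_zero (fun hcos => ?_) pi_ne_zero)
      simpa [h, hcos] using sin_sq_add_cos_sq (α * π)
    · exact (hasDerivAt_sin.continuousAt.eventually_ne h).filter_mono nhdsWithin_le_nhds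
  have continuous_rhs :
      Continuous fun β => (x / 2) ^ (-β) * macdonaldIntegral β (x ^ 2 / 4) / 2 :=
    (((continuous_const_rpow (by positivity)).comp continuous_neg).mul
      (continuous_macdonaldIntegral_index (by positivity))).div_const 2
  refine Tendsto.limUnder_eq ((continuous_rhs.continuousAt.tendsto.mono_left
    nhdsWithin_le_nhds).congr' ?_)
  filter_upwards [sin_ne_zero] with β hβ
  have key := sin_div_pi_mul_macdonaldIntegral β (show 0 < x ^ 2 / 4 by positivity)
  have rpow_sq : (x ^ 2 / 4) ^ β = (x / 2) ^ β * (x / 2) ^ β := by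
    rw [← mul_rpow (by positivity) (by positivity)]
    ring_nf
  rw [besselI_eq_besselClifford hx, besselI_eq_besselClifford hx]
  rw [rpow_sq, mul_comm π] at key
  have : (x / 2) ^ β ≠ 0 := (rpow_pos_of_pos (half_pos hx) β).ne'
  rw [rpow_neg (half_pos hx).le]
  field_simp at key ⊢
  linear_combination key

/-! ### Weber's integral -/

lemma integrableOn_exp_neg_mul_rpow {p : ℝ} (hp : -1 < p) :
    IntegrableOn (fun z => exp (-z) * z ^ p) (Ioi 0) := by
  simpa using GammaIntegral_convergent (s := p + 1) (by linarith)

lemma integral_exp_neg_mul_rpow_eq_Gamma {p : ℝ} (hp : -1 < p) :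
    ∫ z in Ioi 0, exp (-z) * z ^ p = Gamma (p + 1) := by
  simp [Gamma_eq_integral (show 0 < p + 1 by linarith)]

lemma integrableOn_mul_besselClifford {f : ℝ → ℝ} {α s : ℝ} (hf : IntegrableOn f (Ioi 0))
    (hα : -1 / 2 ≤ α) (hs : 0 ≤ s) :
    IntegrableOn (fun z => f z * besselClifford α (-(s * z))) (Ioi 0) := by
  refine hf.mul_bdd (c := (Gamma (α + 1))⁻¹) (Continuous.aestronglyMeasurable (by fun_prop)) ?_
  filter_upwards [ae_restrict_mem measurableSet_Ioi] with z hz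
  exact abs_besselClifford_le hα (neg_nonpos.2 (mul_nonneg hs (le_of_lt hz)))

lemma hasDerivAt_integral_mul_besselClifford {f : ℝ → ℝ} {α s : ℝ}
    (hf : IntegrableOn f (Ioi 0)) (hf' : IntegrableOn (fun z => z * f z) (Ioi 0))
    (hα : -1 / 2 ≤ α) (hs : 0 < s) :
    HasDerivAt (fun s => ∫ z in Ioi 0, f z * besselClifford α (-(s * z)))
      (-∫ z in Ioi 0, z * f z * besselClifford (α + 1) (-(s * z))) s := by
  have hα' : -1 / 2 ≤ α + 1 := by linarith
  rw [← integral_neg]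
  refine (hasDerivAt_integral_of_dominated_loc_of_deriv_le (s := Ioi 0)
    (μ := volume.restrict (Ioi 0)) (F := fun s z => f z * besselClifford α (-(s * z)))
    (F' := fun s z => -(z * f z * besselClifford (α + 1) (-(s * z))))
    (bound := fun z => ‖z * f z‖ * (Gamma (α + 1 + 1))⁻¹) (Ioi_mem_nhds hs) ?_
    (integrableOn_mul_besselClifford hf hα hs.le)
    (integrableOn_mul_besselClifford hf' hα' hs.le).aestronglyMeasurable.neg ?_
    (hf'.norm.mul_const _) ?_).2
  · filter_upwards [Ioi_mem_nhds hs] with s (hs : 0 < s)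
    exact (integrableOn_mul_besselClifford hf hα hs.le).aestronglyMeasurable
  · filter_upwards [ae_restrict_mem measurableSet_Ioi] with z (hz : 0 < z) s (hs : 0 < s)
    rw [norm_neg, norm_mul]
    gcongr
    exact abs_besselClifford_le hα' (neg_nonpos.2 (by positivity))
  · refine ae_of_all _ fun z s _ => ?_
    simp only [mul_comm _ z]
    refine ((hasDerivAt_besselClifford_neg_mul α z s).const_mul (f z)).congr_deriv ?_
    ring

lemma continuousOn_integral_mul_besselClifford {f : ℝ → ℝ} {α : ℝ}
    (hf : IntegrableOn f (Ioi 0)) (hα : -1 / 2 ≤ α) :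
    ContinuousOn (fun s => ∫ z in Ioi 0, f z * besselClifford α (-(s * z))) (Ici 0) := by
  refine continuousOn_of_dominated (bound := fun z => ‖f z‖ * (Gamma (α + 1))⁻¹)
    (fun s hs => (integrableOn_mul_besselClifford hf hα hs).aestronglyMeasurable)
    (fun s hs => ?_) (hf.norm.mul_const _) (ae_of_all _ fun z => by fun_prop)
  filter_upwards [ae_restrict_mem measurableSet_Ioi] with z hz
  rw [norm_mul]
  gcongr
  exact abs_besselClifford_le hα (neg_nonpos.2 (mul_nonneg hs (le_of_lt hz)))

/-- Weber's second exponential integral, evaluated in `weberIntegral_eq`. -/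
def weberIntegral (α X Y : ℝ) : ℝ :=
  ∫ z in Ioi 0, exp (-z) * z ^ α * besselClifford α (-(Y * z)) * besselClifford α (-(X * z))

lemma weberIntegral_comm (α X Y : ℝ) : weberIntegral α X Y = weberIntegral α Y X := by
  simp only [weberIntegral, mul_right_comm]

lemma weberIntegral_zero_zero {α : ℝ} (hα : -1 < α) :
    weberIntegral α 0 0 = (Gamma (α + 1))⁻¹ := by
  simp only [weberIntegral, zero_mul, neg_zero, besselClifford_zero, integral_mul_const,
    integral_exp_neg_mul_rpow_eq_Gamma hα]
  rw [mul_inv_cancel₀ (Gamma_pos_of_pos (by linarith)).ne', one_mul]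

lemma integrableOn_exp_neg_mul_rpow_mul_besselClifford {α p Y : ℝ} (hp : -1 < p)
    (hα : -1 / 2 ≤ α) (hY : 0 ≤ Y) :
    IntegrableOn (fun z => exp (-z) * z ^ p * besselClifford α (-(Y * z))) (Ioi 0) :=
  integrableOn_mul_besselClifford (integrableOn_exp_neg_mul_rpow hp) hα hY

lemma abs_weberIntegral_le {α X Y : ℝ} (hα : -1 / 2 ≤ α) (hX : 0 ≤ X) (hY : 0 ≤ Y) :
    |weberIntegral α X Y| ≤ (Gamma (α + 1))⁻¹ := by
  rw [← weberIntegral_zero_zero (by linarith), weberIntegral, weberIntegral, ← norm_eq_abs]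
  refine norm_integral_le_of_norm_le (integrableOn_mul_besselClifford
    (integrableOn_exp_neg_mul_rpow_mul_besselClifford (by linarith) hα le_rfl) hα le_rfl) ?_
  filter_upwards [ae_restrict_mem measurableSet_Ioi] with z (hz : 0 < z)
  rw [norm_mul, norm_mul, norm_of_nonneg (by positivity), zero_mul, neg_zero, besselClifford_zero]
  have Gamma_pos : 0 < Gamma (α + 1) := Gamma_pos_of_pos (by linarith)
  gcongr <;> exact abs_besselClifford_le hα (neg_nonpos.2 (by positivity))

lemma hasDerivAt_rpow_mul_besselClifford (α X : ℝ) {z : ℝ} (hz : 0 < z) :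
    HasDerivAt (fun z => z ^ (α + 1) * besselClifford (α + 1) (-(X * z)))
      (z ^ α * besselClifford α (-(X * z))) z := by
  refine ((hasDerivAt_rpow_const (Or.inl hz.ne')).mul
    (hasDerivAt_besselClifford_neg_mul (α + 1) X z)).congr_deriv ?_
  rw [besselClifford_eq_add α, rpow_add_one hz.ne', add_sub_cancel_right,
    show α + 1 + 1 = α + 2 by ring]
  ring

lemma hasDerivAt_exp_neg_mul_besselClifford (α Y z : ℝ) :
    HasDerivAt (fun z => exp (-z) * besselClifford α (-(Y * z)))
      (-(exp (-z) * besselClifford α (-(Y * z))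
        + Y * (exp (-z) * besselClifford (α + 1) (-(Y * z))))) z := by
  refine ((hasDerivAt_neg z).exp.mul (hasDerivAt_besselClifford_neg_mul α Y z)).congr_deriv ?_
  ring

lemma tendsto_exp_neg_mul_rpow_mul_besselClifford_atTop {α X Y : ℝ} (hα : -1 / 2 ≤ α)
    (hX : 0 ≤ X) (hY : 0 ≤ Y) :
    Tendsto (fun z => exp (-z) * besselClifford α (-(Y * z))
      * (z ^ (α + 1) * besselClifford (α + 1) (-(X * z)))) atTop (𝓝 0) := by
  have tendsto_bound := (tendsto_rpow_mul_exp_neg_mul_atTop_nhds_zero (α + 1) 1 one_pos).mul_const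
    ((Gamma (α + 1))⁻¹ * (Gamma (α + 1 + 1))⁻¹)
  rw [zero_mul] at tendsto_bound
  refine squeeze_zero_norm' ?_ tendsto_bound
  filter_upwards [eventually_gt_atTop 0] with z hz
  have Gamma_pos : 0 < Gamma (α + 1) := Gamma_pos_of_pos (by linarith)
  calc _ = z ^ (α + 1) * exp (-1 * z)
        * (|besselClifford α (-(Y * z))| * |besselClifford (α + 1) (-(X * z))|) := by
        rw [norm_mul, norm_mul, norm_mul, norm_of_nonneg (exp_nonneg _),
          norm_of_nonneg (rpow_nonneg hz.le _), neg_one_mul]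
        simp only [norm_eq_abs]
        ring
    _ ≤ _ := by
        gcongr <;> exact abs_besselClifford_le (by linarith) (neg_nonpos.2 (by positivity))

/- Integration by parts: `z^α C_α(-Xz)` is the derivative of `z^(α+1) C_(α+1)(-Xz)`. -/
lemma integral_exp_neg_mul_besselClifford_mul_succ {α X Y : ℝ} (hα : -1 / 2 ≤ α) (hX : 0 ≤ X)
    (hY : 0 ≤ Y) :
    ∫ z in Ioi 0, exp (-z) * z ^ (α + 1) * besselClifford α (-(Y * z))
        * besselClifford (α + 1) (-(X * z))
      = weberIntegral α X Y - Y * weberIntegral (α + 1) X Y := by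
  have hα' : -1 / 2 ≤ α + 1 := by linarith
  have integrable_lhs := integrableOn_mul_besselClifford
    (integrableOn_exp_neg_mul_rpow_mul_besselClifford (show -1 < α + 1 by linarith) hα hY) hα' hX
  have integrable_weber {β : ℝ} (hβ : -1 / 2 ≤ β) := integrableOn_mul_besselClifford
    (integrableOn_exp_neg_mul_rpow_mul_besselClifford (show -1 < β by linarith) hβ hY) hβ hX
  have tendsto_zero : Tendsto (fun z => exp (-z) * besselClifford α (-(Y * z))
      * (z ^ (α + 1) * besselClifford (α + 1) (-(X * z)))) (𝓝[>] 0) (𝓝 0) := by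
    have := continuous_rpow_const (show 0 ≤ α + 1 by linarith)
    refine (Continuous.tendsto' (by fun_prop) _ _ ?_).mono_left nhdsWithin_le_nhds
    simp [zero_rpow (show α + 1 ≠ 0 by linarith)]
  have integrable_sub : IntegrableOn (fun z =>
      exp (-z) * z ^ α * besselClifford α (-(Y * z)) * besselClifford α (-(X * z))
      - Y * (exp (-z) * z ^ (α + 1) * besselClifford (α + 1) (-(Y * z))
        * besselClifford (α + 1) (-(X * z)))) (Ioi 0) :=
    (integrable_weber hα).sub ((integrable_weber hα').const_mul Y)
  have by_parts := integral_Ioi_deriv_mul_eq_sub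
    (fun z _ => hasDerivAt_exp_neg_mul_besselClifford α Y z)
    (fun z hz => hasDerivAt_rpow_mul_besselClifford α X hz)
    ((integrable_sub.sub integrable_lhs).congr (ae_of_all _ fun z => ?_)) tendsto_zero
    (tendsto_exp_neg_mul_rpow_mul_besselClifford_atTop hα hX hY)
  · rw [weberIntegral, weberIntegral, ← integral_const_mul, ← integral_sub (integrable_weber hα)
      ((integrable_weber hα').const_mul Y), eq_comm, ← sub_eq_zero,
      ← integral_sub integrable_sub integrable_lhs]
    refine Eq.trans ?_ (by_parts.trans (sub_zero 0))
    congr 1 with z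
    ring
  · simp only [Pi.sub_apply, Pi.add_apply, Pi.mul_apply]
    ring

lemma hasDerivAt_weberIntegral {α X Y : ℝ} (hα : -1 / 2 ≤ α) (hX : 0 < X) (hY : 0 ≤ Y) :
    HasDerivAt (fun X => weberIntegral α X Y)
      (Y * weberIntegral (α + 1) X Y - weberIntegral α X Y) X := by
  have integrand_succ {z : ℝ} (hz : z ∈ Ioi 0) :
      exp (-z) * z ^ (α + 1) * besselClifford α (-(Y * z))
        = z * (exp (-z) * z ^ α * besselClifford α (-(Y * z))) := by
    rw [rpow_add_one (ne_of_gt hz)]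
    ring
  refine (hasDerivAt_integral_mul_besselClifford
    (integrableOn_exp_neg_mul_rpow_mul_besselClifford (by linarith) hα hY)
    ((integrableOn_exp_neg_mul_rpow_mul_besselClifford (p := α + 1) (by linarith) hα hY).congr_fun
      (fun z hz => integrand_succ hz) measurableSet_Ioi) hα hX).congr_deriv ?_
  rw [← neg_sub, ← integral_exp_neg_mul_besselClifford_mul_succ hα hX.le hY]
  exact congrArg Neg.neg <| setIntegral_congr_fun measurableSet_Ioi fun z hz => by
    simp only [integrand_succ hz]

lemma continuousOn_weberIntegral {α Y : ℝ} (hα : -1 / 2 ≤ α) (hY : 0 ≤ Y) :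
    ContinuousOn (fun X => weberIntegral α X Y) (Ici 0) :=
  continuousOn_integral_mul_besselClifford
    (integrableOn_exp_neg_mul_rpow_mul_besselClifford (by linarith) hα hY) hα

lemma hasDerivAt_exp_mul_weberIntegral {α X Y : ℝ} (hα : -1 / 2 ≤ α) (hX : 0 < X) (hY : 0 ≤ Y) :
    HasDerivAt (fun X => exp X * weberIntegral α X Y)
      (Y * (exp X * weberIntegral (α + 1) X Y)) X := by
  refine ((hasDerivAt_exp X).mul (hasDerivAt_weberIntegral hα hX hY)).congr_deriv ?_
  ring

lemma abs_le_of_abs_deriv_le {f f' b b' : ℝ → ℝ} {X : ℝ} (hX : 0 ≤ X)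
    (hf : ContinuousOn f (Icc 0 X)) (hb : ContinuousOn b (Icc 0 X))
    (hf' : ∀ x ∈ Ioo 0 X, HasDerivAt f (f' x) x) (hb' : ∀ x ∈ Ioo 0 X, HasDerivAt b (b' x) x)
    (h0 : |f 0| ≤ b 0) (h : ∀ x ∈ Ioo 0 X, |f' x| ≤ b' x) : |f X| ≤ b X := by
  have monotoneOn_sub : MonotoneOn (b - f) (Icc 0 X) := by
    refine monotoneOn_of_hasDerivWithinAt_nonneg (f' := b' - f') (convex_Icc 0 X) (hb.sub hf) ?_ ?_
    all_goals simp only [interior_Icc]; intro x hx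
    · exact ((hb' x hx).sub (hf' x hx)).hasDerivWithinAt
    · exact sub_nonneg.2 (abs_le.1 (h x hx)).2
  have monotoneOn_add : MonotoneOn (b + f) (Icc 0 X) := by
    refine monotoneOn_of_hasDerivWithinAt_nonneg (f' := b' + f') (convex_Icc 0 X) (hb.add hf) ?_ ?_
    all_goals simp only [interior_Icc]; intro x hx
    · exact ((hb' x hx).add (hf' x hx)).hasDerivWithinAt
    · exact neg_le_iff_add_nonneg'.1 (abs_le.1 (h x hx)).1
  have sub_le := monotoneOn_sub (left_mem_Icc.2 hX) (right_mem_Icc.2 hX) hX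
  have add_le := monotoneOn_add (left_mem_Icc.2 hX) (right_mem_Icc.2 hX) hX
  simp only [Pi.sub_apply, Pi.add_apply] at sub_le add_le
  rw [abs_le] at h0 ⊢
  constructor <;> linarith

/- The functions are the successive derivatives of the first one up to powers of `c`, so Taylor's
formula bounds them by `B * (c * x) ^ N / N!` for every `N`. -/
lemma eq_zero_of_hasDerivAt_succ {g : ℕ → ℝ → ℝ} {B c X : ℝ} (hc : 0 ≤ c) (hX : 0 ≤ X)
    (hcont : ∀ n, ContinuousOn (g n) (Icc 0 X))
    (hderiv : ∀ n, ∀ x ∈ Ioo 0 X, HasDerivAt (g n) (c * g (n + 1) x) x)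
    (hzero : ∀ n, g n 0 = 0) (hbound : ∀ n, ∀ x ∈ Icc 0 X, |g n x| ≤ B) (n : ℕ) : g n X = 0 := by
  have bound (N : ℕ) : ∀ n, ∀ x ∈ Icc 0 X, |g n x| ≤ B * ((c * x) ^ N / N.factorial) := by
    induction N with
    | zero => simpa using hbound
    | succ N ih =>
      intro n x hx
      have hasDerivAt_bound (y : ℝ) : HasDerivAt
          (fun y => B * ((c * y) ^ (N + 1) / (N + 1).factorial))
          (c * (B * ((c * y) ^ N / N.factorial))) y := by
        refine ((((hasDerivAt_id y).const_mul c).pow (N + 1)).div_const _).const_mul B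
          |>.congr_deriv ?_
        rw [Nat.factorial_succ]
        push_cast
        simp only [id_eq]
        field_simp
      have Ioo_subset : Ioo 0 x ⊆ Ioo 0 X := Ioo_subset_Ioo_right hx.2
      refine abs_le_of_abs_deriv_le (b := fun y => B * ((c * y) ^ (N + 1) / (N + 1).factorial))
        hx.1 ((hcont n).mono (Icc_subset_Icc_right hx.2)) (by fun_prop)
        (fun y hy => hderiv n y (Ioo_subset hy)) (fun y _ => hasDerivAt_bound y)
        (by simp [hzero]) fun y hy => ?_
      rw [abs_mul, abs_of_nonneg hc]
      gcongr
      exact ih (n + 1) y (Ioo_subset_Icc_self (Ioo_subset hy))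
  have tendsto_zero := (FloorSemiring.tendsto_pow_div_factorial_atTop (c * X)).const_mul B
  rw [mul_zero] at tendsto_zero
  exact abs_nonpos_iff.1 <| ge_of_tendsto' tendsto_zero fun N => bound N n X ⟨hX, le_rfl⟩

lemma weberIntegral_zero_left {α Y : ℝ} (hα : -1 / 2 ≤ α) (hY : 0 ≤ Y) :
    weberIntegral α 0 Y = exp (-Y) * (Gamma (α + 1))⁻¹ := by
  have exp_mul_sub_eq_zero : exp Y * weberIntegral α Y 0 - (Gamma (α + 1))⁻¹ = 0 := by
    refine abs_nonpos_iff.1 <| abs_le_of_abs_deriv_le (b := 0) (b' := 0)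
      (f := fun Y => exp Y * weberIntegral α Y 0 - (Gamma (α + 1))⁻¹) hY
      (((continuousOn_exp.mul (continuousOn_weberIntegral hα le_rfl)).sub continuousOn_const).mono
        Icc_subset_Ici_self) continuousOn_const
      (fun y hy => (hasDerivAt_exp_mul_weberIntegral hα hy.1 le_rfl).sub_const _)
      (fun y _ => hasDerivAt_const y 0) ?_ fun y _ => ?_
    all_goals simp [weberIntegral_zero_zero (show -1 < α by linarith)]
  rw [weberIntegral_comm, ← sub_eq_zero.1 exp_mul_sub_eq_zero, ← mul_assoc, ← exp_add,
    neg_add_cancel, exp_zero, one_mul]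

lemma exists_abs_besselClifford_add_natCast_le (α : ℝ) :
    ∃ B, ∀ (n : ℕ) w, |besselClifford (α + n) w| ≤ B * exp |w| := by
  obtain ⟨B, hB⟩ := exists_abs_inv_Gamma_natCast_add_le (α + 1)
  refine ⟨B, fun n w => ?_⟩
  have hasSum_bound := (NormedSpace.expSeries_div_hasSum_exp |w|).mul_left B
  rw [← exp_eq_exp_ℝ] at hasSum_bound
  rw [← norm_eq_abs (besselClifford _ _)]
  refine tsum_of_norm_bounded hasSum_bound fun m => ?_
  rw [div_mul_eq_div_mul_one_div, one_div, mul_comm, norm_mul, norm_div, norm_pow, norm_natCast,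
    norm_eq_abs, norm_eq_abs, show m + (α + n) + 1 = (m + n : ℕ) + (α + 1) by push_cast; ring]
  gcongr
  exact hB (m + n)

/- After multiplication by `exp X`, both sides satisfy the same hierarchy of differential equations
in `X`, with the same values at `X = 0`. -/
lemma weberIntegral_eq {α X Y : ℝ} (hα : -1 / 2 ≤ α) (hX : 0 ≤ X) (hY : 0 ≤ Y) :
    weberIntegral α X Y = exp (-X - Y) * besselClifford α (X * Y) := by
  obtain ⟨B, hB⟩ := exists_abs_inv_Gamma_natCast_add_le (α + 1)
  obtain ⟨B', hB'⟩ := exists_abs_besselClifford_add_natCast_le α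
  have hα_add (n : ℕ) : -1 / 2 ≤ α + n := by
    have := n.cast_nonneg (α := ℝ)
    linarith
  have difference_eq_zero := eq_zero_of_hasDerivAt_succ (B := exp X * B + B' * exp (X * Y))
    (g := fun n x => exp x * weberIntegral (α + n) x Y - exp (-Y) * besselClifford (α + n) (x * Y))
    hY hX (fun n => ?_) (fun n x hx => ?_) (fun n => ?_) (fun n x hx => ?_) 0
  · rw [Nat.cast_zero, add_zero, sub_eq_zero] at difference_eq_zero
    rw [sub_eq_add_neg, exp_add, mul_assoc, ← difference_eq_zero, ← mul_assoc, ← exp_add,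
      neg_add_cancel, exp_zero, one_mul]
  · exact (continuousOn_exp.mul ((continuousOn_weberIntegral (hα_add n) hY).mono
      Icc_subset_Ici_self)).sub (Continuous.continuousOn (by fun_prop))
  · refine ((hasDerivAt_exp_mul_weberIntegral (hα_add n) hx.1 hY).sub <|
      ((hasDerivAt_besselClifford (α + n) (x * Y)).comp x
        (hasDerivAt_mul_const Y)).const_mul _).congr_deriv ?_
    push_cast
    ring_nf
  · simp [weberIntegral_zero_left (hα_add n) hY, besselClifford_zero]
  · have weber_le : |weberIntegral (α + n) x Y| ≤ B := by
      refine (abs_weberIntegral_le (hα_add n) hx.1 hY).trans ((le_abs_self _).trans ?_)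
      rw [show α + n + 1 = n + (α + 1) by ring]
      exact hB n
    have clifford_le : |besselClifford (α + n) (x * Y)| ≤ B' * exp (X * Y) := by
      have hB'_nonneg : 0 ≤ B' := by simpa using (abs_nonneg _).trans (hB' 0 0)
      refine (hB' n _).trans ?_
      rw [abs_of_nonneg (mul_nonneg hx.1 hY)]
      gcongr
      exact hx.2
    have exp_neg_le : exp (-Y) ≤ 1 := exp_le_one_iff.2 (neg_nonpos.2 hY)
    refine (abs_sub _ _).trans ?_
    rw [abs_mul, abs_mul, abs_exp, abs_exp]
    refine add_le_add (by gcongr; exact hx.2) ?_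
    exact (mul_le_of_le_one_left (abs_nonneg _) exp_neg_le).trans clifford_le

/-! ### Laplace transforms -/

lemma Gamma_mul_ascPochhammer_eval {l : ℝ} (hl : 0 < l) (m : ℕ) :
    Gamma l * (ascPochhammer ℝ m).eval l = Gamma (m + l) := by
  induction m with
  | zero => simp
  | succ m ih =>
    rw [ascPochhammer_succ_eval, ← mul_assoc, ih, Nat.cast_succ, add_right_comm,
      Gamma_add_one (by positivity), add_comm l, mul_comm]

lemma hasSum_Gamma_natCast_add_mul_pow_div_factorial {l x : ℝ} (hl : 0 < l) (hx : |x| < 1) :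
    HasSum (fun m : ℕ => Gamma (m + l) * x ^ m / m.factorial) (Gamma l * (1 - x) ^ (-l)) := by
  have hasSum_choose := ((one_div_one_sub_rpow_hasFPowerSeriesOnBall_zero l).hasSum
    (y := x) (by simpa [enorm_eq_nnnorm, ← NNReal.coe_lt_coe] using hx)).mul_left (Gamma l)
  rw [zero_add, one_div, ← rpow_neg (by linarith [(abs_lt.1 hx).2])] at hasSum_choose
  refine hasSum_choose.congr_fun fun m => ?_
  have choose_eq := Ring.factorial_nsmul_multichoose_eq_ascPochhammer l m
  rw [Polynomial.ascPochhammer_smeval_eq_eval, nsmul_eq_mul] at choose_eq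
  rw [FormalMultilinearSeries.ofScalars_apply_eq, Ring.choose, sub_right_comm,
    add_sub_cancel_right, sub_add_cancel, ← Gamma_mul_ascPochhammer_eval hl, ← choose_eq,
    smul_eq_mul]
  field_simp

lemma integral_rpow_mul_exp_neg_mul {p A : ℝ} (hp : -1 < p) (hA : 0 < A) :
    ∫ t in Ioi 0, t ^ p * exp (-(A * t)) = Gamma (p + 1) * A ^ (-(p + 1)) := by
  have := integral_rpow_mul_exp_neg_mul_Ioi (a := p + 1) (by linarith) hA
  rwa [add_sub_cancel_right, one_div, inv_rpow hA.le, ← rpow_neg hA.le, mul_comm] at this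

lemma integrableOn_rpow_mul_exp_neg_mul {p A : ℝ} (hp : -1 < p) (hA : 0 < A) :
    IntegrableOn (fun t => t ^ p * exp (-(A * t))) (Ioi 0) := by
  simpa only [rpow_one, neg_mul] using integrableOn_rpow_mul_exp_neg_mul_rpow hp one_pos hA

lemma rpow_mul_one_sub_div_sq_rpow {A q : ℝ} (hA : 0 < A) (hq : 4 * q < A ^ 2) (a l : ℝ) :
    A ^ (-a) * (1 - 4 * q / A ^ 2) ^ (-l) = A ^ (2 * l - a) * (A ^ 2 - 4 * q) ^ (-l) := by
  have hq' : 0 ≤ A ^ 2 - 4 * q := by linarith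
  rw [one_sub_div (by positivity), div_rpow hq' (by positivity), ← rpow_natCast,
    ← rpow_mul hA.le, show 2 * l - a = -a - (2 : ℕ) * -l by push_cast; ring, rpow_sub hA]
  ring

lemma integral_rpow_mul_exp_neg_mul_besselClifford_of_hasSum {p α A q S : ℝ} (hp : -1 < p)
    (hα : -1 < α) (hA : 0 < A) (hq : 0 ≤ q)
    (hS : HasSum (fun m : ℕ => q ^ m / (m.factorial * Gamma (m + α + 1))
      * (Gamma (p + 2 * m + 1) * A ^ (-(p + 2 * m + 1)))) S) :
    ∫ t in Ioi 0, t ^ p * exp (-(A * t)) * besselClifford α (q * t ^ 2) = S := by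
  have hp_add (m : ℕ) : -1 < p + 2 * m := by
    have := m.cast_nonneg (α := ℝ)
    linarith
  have Gamma_pos (m : ℕ) : 0 < Gamma (m + α + 1) := by
    have := m.cast_nonneg (α := ℝ)
    exact Gamma_pos_of_pos (by linarith)
  simp only [← integral_rpow_mul_exp_neg_mul (hp_add _) hA, ← integral_const_mul] at hS
  have hasSum_integral := hasSum_integral_of_summable_integral_norm
    (fun m => (integrableOn_rpow_mul_exp_neg_mul (hp_add m) hA).const_mul
      (q ^ m / (m.factorial * Gamma (m + α + 1)))) (hS.summable.congr fun m => ?_)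
  · rw [← hasSum_integral.unique hS]
    refine setIntegral_congr_fun measurableSet_Ioi fun t ht => ?_
    simp only [besselClifford, ← tsum_mul_left]
    refine tsum_congr fun m => ?_
    rw [show p + 2 * m = p + (2 * m : ℕ) by push_cast; ring, rpow_add_natCast (ne_of_gt ht)]
    ring
  · refine setIntegral_congr_fun measurableSet_Ioi fun t (ht : 0 < t) => (norm_of_nonneg ?_).symm
    have := Gamma_pos m
    positivity

/- The hypothesis on `c` is what remains of Legendre's duplication formula; it turns the termwise
integral into a binomial series. -/
lemma integral_rpow_mul_exp_neg_mul_besselClifford {p α l c A q : ℝ} (hp : -1 < p) (hα : -1 < α)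
    (hl : 0 < l) (hA : 0 < A) (hq : 0 ≤ q) (hqA : 4 * q < A ^ 2)
    (hc : ∀ m : ℕ, Gamma (p + 2 * m + 1) = c * 4 ^ m * Gamma (m + α + 1) * Gamma (m + l)) :
    ∫ t in Ioi 0, t ^ p * exp (-(A * t)) * besselClifford α (q * t ^ 2)
      = c * Gamma l * (A ^ (2 * l - (p + 1)) * (A ^ 2 - 4 * q) ^ (-l)) := by
  have ratio_lt_one : |4 * q / A ^ 2| < 1 := by
    rwa [abs_of_nonneg (by positivity), div_lt_one (by positivity)]
  rw [← rpow_mul_one_sub_div_sq_rpow hA hqA, mul_mul_mul_comm]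
  refine integral_rpow_mul_exp_neg_mul_besselClifford_of_hasSum hp hα hA hq <|
    ((hasSum_Gamma_natCast_add_mul_pow_div_factorial hl ratio_lt_one).mul_left
      (c * A ^ (-(p + 1)))).congr_fun fun m => ?_
  have Gamma_ne_zero : Gamma (m + α + 1) ≠ 0 := by
    have := m.cast_nonneg (α := ℝ)
    exact (Gamma_pos_of_pos (by linarith)).ne'
  rw [hc, show -(p + 2 * m + 1) = -(p + 1) - (2 * m : ℕ) by push_cast; ring,
    rpow_sub_natCast hA.ne', pow_mul, div_pow, mul_pow]
  field_simp

lemma Gamma_two_mul (x : ℝ) :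
    Gamma (2 * x) = 2 ^ (2 * x - 1) / √π * (Gamma x * Gamma (x + 1 / 2)) := by
  rw [Gamma_mul_Gamma_add_half, ← neg_sub, rpow_neg two_pos.le]
  field_simp

lemma two_rpow_add_two_mul_natCast (a : ℝ) (m : ℕ) : (2 : ℝ) ^ (a + 2 * m) = 2 ^ a * 4 ^ m := by
  rw [show a + 2 * m = a + (2 * m : ℕ) by push_cast; ring, rpow_add_natCast two_ne_zero, pow_mul]
  norm_num

lemma integral_rpow_two_mul_mul_exp_neg_mul_besselClifford {α A q : ℝ} (hα : -1 / 2 < α)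
    (hA : 0 < A) (hq : 0 ≤ q) (hqA : 4 * q < A ^ 2) :
    ∫ t in Ioi 0, t ^ (2 * α) * exp (-(A * t)) * besselClifford α (q * t ^ 2)
      = 2 ^ (2 * α) / √π * Gamma (α + 1 / 2) * (A ^ 2 - 4 * q) ^ (-(α + 1 / 2)) := by
  rw [integral_rpow_mul_exp_neg_mul_besselClifford (l := α + 1 / 2) (c := 2 ^ (2 * α) / √π)
    (by linarith) (by linarith) (by linarith) hA hq hqA fun m => ?_]
  · rw [show 2 * (α + 1 / 2) - (2 * α + 1) = 0 by ring, rpow_zero, one_mul]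
  · rw [show 2 * α + 2 * m + 1 = 2 * (m + (α + 1 / 2)) by ring, Gamma_two_mul,
      show 2 * (m + (α + 1 / 2)) - 1 = 2 * α + 2 * m by ring, two_rpow_add_two_mul_natCast,
      show m + (α + 1 / 2) + 1 / 2 = m + α + 1 by ring]
    ring

lemma integral_rpow_two_mul_add_one_mul_exp_neg_mul_besselClifford {α A q : ℝ} (hα : -1 < α)
    (hA : 0 < A) (hq : 0 ≤ q) (hqA : 4 * q < A ^ 2) :
    ∫ t in Ioi 0, t ^ (2 * α + 1) * exp (-(A * t)) * besselClifford α (q * t ^ 2)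
      = 2 ^ (2 * α + 1) / √π * Gamma (α + 3 / 2) * (A * (A ^ 2 - 4 * q) ^ (-(α + 3 / 2))) := by
  rw [integral_rpow_mul_exp_neg_mul_besselClifford (l := α + 3 / 2) (c := 2 ^ (2 * α + 1) / √π)
    (by linarith) hα (by linarith) hA hq hqA fun m => ?_]
  · rw [show 2 * (α + 3 / 2) - (2 * α + 1 + 1) = 1 by ring, rpow_one]
  · rw [show 2 * α + 1 + 2 * m + 1 = 2 * (m + α + 1) by ring, Gamma_two_mul,
      show 2 * (m + α + 1) - 1 = 2 * α + 1 + 2 * m by ring, two_rpow_add_two_mul_natCast,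
      show m + α + 1 + 1 / 2 = m + (α + 3 / 2) by ring]
    ring

/-! ### Moments of the Macdonald function -/

lemma integral_macdonaldKernel_mul_rpow_mul (β p : ℝ) (G : ℝ → ℝ) {t : ℝ} (ht : 0 < t) :
    ∫ z in Ioi 0, macdonaldKernel β z t * z ^ p * G z
      = exp (-t) * t ^ (β + p) * ∫ z in Ioi 0, exp (-z) * z ^ p * G (t * z) := by
  have rescale := integral_comp_mul_left_Ioi (fun z => macdonaldKernel β z t * z ^ p * G z) 0 ht
  rw [mul_zero, smul_eq_mul, eq_inv_mul_iff_mul_eq₀ ht.ne'] at rescale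
  rw [← rescale, ← integral_const_mul, ← integral_const_mul]
  refine setIntegral_congr_fun measurableSet_Ioi fun z (hz : 0 < z) => ?_
  simp only [macdonaldKernel]
  rw [mul_div_cancel_left₀ _ ht.ne', mul_rpow ht.le hz.le, sub_eq_add_neg, exp_add,
    rpow_sub_one ht.ne', rpow_add ht]
  field_simp

lemma integrableOn_macdonaldKernel_mul_rpow (β : ℝ) {p t : ℝ} (hp : -1 < p) (ht : 0 < t) :
    IntegrableOn (fun z => macdonaldKernel β z t * z ^ p) (Ioi 0) := by
  refine IntegrableOn.congr_fun ((integrableOn_rpow_mul_exp_neg_mul hp (inv_pos.2 ht)).const_mul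
    (exp (-t) * t ^ (β - 1))) (fun z _ => ?_) measurableSet_Ioi
  simp only [macdonaldKernel, sub_eq_add_neg, exp_add, div_eq_inv_mul]
  ring

lemma integrable_macdonaldKernel_mul_rpow_prod {β p : ℝ} (hp : -1 < p) (hβp : -1 < β + p) :
    Integrable (fun x : ℝ × ℝ => macdonaldKernel β x.2 x.1 * x.2 ^ p)
      ((volume.restrict (Ioi 0)).prod (volume.restrict (Ioi 0))) := by
  refine (integrable_prod_iff (Measurable.aestronglyMeasurable ?_)).2 ⟨?_, ?_⟩
  · unfold macdonaldKernel
    fun_prop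
  · filter_upwards [ae_restrict_mem measurableSet_Ioi] with t ht
    exact integrableOn_macdonaldKernel_mul_rpow β hp ht
  · refine IntegrableOn.congr_fun ((integrableOn_exp_neg_mul_rpow hβp).mul_const (Gamma (p + 1)))
      (fun t (ht : 0 < t) => ?_) measurableSet_Ioi
    rw [← integral_exp_neg_mul_rpow_eq_Gamma hp]
    have rescale := integral_macdonaldKernel_mul_rpow_mul β p 1 ht
    simp only [Pi.one_apply, mul_one] at rescale
    rw [← rescale]
    refine setIntegral_congr_fun measurableSet_Ioi fun z (hz : 0 < z) => (norm_of_nonneg ?_).symm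
    exact mul_nonneg (macdonaldKernel_nonneg β z ht) (by positivity)

lemma integrableOn_macdonaldIntegral_mul_rpow {β p : ℝ} (hp : -1 < p) (hβp : -1 < β + p) :
    IntegrableOn (fun z => macdonaldIntegral β z * z ^ p) (Ioi 0) := by
  simpa only [macdonaldIntegral, ← integral_mul_const]
    using! (integrable_macdonaldKernel_mul_rpow_prod hp hβp).integral_prod_right

lemma integral_macdonaldIntegral_mul_rpow_mul {β p M : ℝ} {G : ℝ → ℝ} (hp : -1 < p)
    (hβp : -1 < β + p) (hG : Continuous G) (hM : ∀ z, 0 < z → |G z| ≤ M) :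
    ∫ z in Ioi 0, macdonaldIntegral β z * z ^ p * G z
      = ∫ t in Ioi 0, exp (-t) * t ^ (β + p) * ∫ z in Ioi 0, exp (-z) * z ^ p * G (t * z) := by
  have integrable_prod : Integrable
      (fun x : ℝ × ℝ => macdonaldKernel β x.2 x.1 * x.2 ^ p * G x.2)
      ((volume.restrict (Ioi 0)).prod (volume.restrict (Ioi 0))) := by
    refine (integrable_macdonaldKernel_mul_rpow_prod hp hβp).mul_bdd (c := M)
      (by fun_prop) ?_
    rw [Measure.prod_restrict]
    filter_upwards [ae_restrict_mem (measurableSet_Ioi.prod measurableSet_Ioi)] with x hx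
    exact hM x.2 hx.2
  calc ∫ z in Ioi 0, macdonaldIntegral β z * z ^ p * G z
      = ∫ z in Ioi 0, ∫ t in Ioi 0, macdonaldKernel β z t * z ^ p * G z := by
        simp only [macdonaldIntegral, integral_mul_const]
    _ = ∫ t in Ioi 0, ∫ z in Ioi 0, macdonaldKernel β z t * z ^ p * G z :=
        (integral_integral_swap integrable_prod).symm
    _ = _ := setIntegral_congr_fun measurableSet_Ioi fun t ht =>
        integral_macdonaldKernel_mul_rpow_mul β p G ht

/-! ### Homogenised Gegenbauer polynomials -/

/-- The coefficient `n! / (k! (n - 2k)!)` of `gegenbauerPotential`; it vanishes for `n < 2k`. -/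
def gegenbauerCoeff (n k : ℕ) : ℝ := n.descFactorial (2 * k) / k.factorial

/-- The monomial of index `k` in `gegenbauerPotential`. -/
def gegenbauerMonomial (n : ℕ) (l r : ℝ) (k : ℕ) (u : ℝ) : ℝ :=
  (-1) ^ k * Gamma (l + n - k) * (2 * u) ^ (n - 2 * k) * (u ^ 2 + 4 * r) ^ (-(l + n - k))

/-- The function `(-d/du)ⁿ (Γ(l) (u² + 4r)^(-l))`, written out so that it keeps its meaning for
`l = 0` and `n ≥ 1`. With `w² = u² + 4r` it is the homogenisation
`n! w^(-(2l + n)) C̃_n^l(u / w)` of a Gegenbauer polynomial. -/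
def gegenbauerPotential (n : ℕ) (l r u : ℝ) : ℝ :=
  ∑ k ∈ Finset.range (n + 1), gegenbauerCoeff n k * gegenbauerMonomial n l r k u

lemma gegenbauerCoeff_zero (n : ℕ) : gegenbauerCoeff n 0 = 1 := by
  simp [gegenbauerCoeff]

lemma gegenbauerCoeff_eq_zero {n k : ℕ} (h : n < 2 * k) : gegenbauerCoeff n k = 0 := by
  simp [gegenbauerCoeff, Nat.descFactorial_of_lt h]

lemma gegenbauerCoeff_eq_div {n k : ℕ} (h : 2 * k ≤ n) :
    gegenbauerCoeff n k = n.factorial / (k.factorial * (n - 2 * k).factorial) := by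
  rw [gegenbauerCoeff, ← Nat.factorial_mul_descFactorial h, Nat.cast_mul]
  field_simp

lemma gegenbauerCoeff_succ_succ (n k : ℕ) :
    gegenbauerCoeff (n + 1) (k + 1)
      = gegenbauerCoeff n (k + 1) + 2 * ((n : ℝ) - 2 * k) * gegenbauerCoeff n k := by
  rcases lt_or_ge n (2 * k) with h | h
  · rw [gegenbauerCoeff_eq_zero h, gegenbauerCoeff_eq_zero (by lia),
      gegenbauerCoeff_eq_zero (by lia)]
    ring
  · simp only [gegenbauerCoeff, mul_add_one, Nat.succ_descFactorial_succ, Nat.descFactorial_succ,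
      Nat.factorial_succ]
    rcases h.eq_or_lt with rfl | h
    · simp
    · obtain ⟨m, rfl⟩ := Nat.exists_eq_add_of_lt h
      push_cast [show 2 * k + m + 1 - (2 * k + 1) = m by lia,
        show 2 * k + m + 1 - 2 * k = m + 1 by lia]
      field_simp
      ring

lemma hasDerivAt_gegenbauerMonomial {n k : ℕ} {l r u : ℝ} (hk : 2 * k ≤ n) (hl : l + n - k ≠ 0)
    (hr : 0 < u ^ 2 + 4 * r) :
    HasDerivAt (gegenbauerMonomial n l r k)
      (-(gegenbauerMonomial (n + 1) l r k u
        + 2 * ((n : ℝ) - 2 * k) * gegenbauerMonomial (n + 1) l r (k + 1) u)) u := by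
  have deriv_pow := ((hasDerivAt_id u).const_mul 2).fun_pow (n - 2 * k)
  have deriv_rpow := (((hasDerivAt_id u).fun_pow 2).add_const (4 * r)).rpow_const
    (p := -(l + n - k)) (.inl hr.ne')
  have Gamma_succ : Gamma (l + (n + 1 : ℕ) - k) = (l + n - k) * Gamma (l + n - k) := by
    rw [← Gamma_add_one hl]
    congr 1
    push_cast
    ring
  refine ((deriv_pow.const_mul ((-1) ^ k * Gamma (l + n - k))).mul deriv_rpow).congr_deriv ?_
  simp only [gegenbauerMonomial, id_eq]
  rw [Gamma_succ, show n + 1 - 2 * k = (n - 2 * k) + 1 by lia,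
    show n + 1 - 2 * (k + 1) = n - 2 * k - 1 by lia]
  push_cast [hk]
  rw [show -(l + ((n : ℝ) + 1) - k) = -(l + n - k) - 1 by ring,
    show l + ((n : ℝ) + 1) - (k + 1) = l + n - k by ring]
  ring

lemma hasDerivAt_gegenbauerPotential {n : ℕ} {l r u : ℝ} (hl : 0 ≤ l) (hln : 0 < l + n)
    (hr : 0 < u ^ 2 + 4 * r) :
    HasDerivAt (gegenbauerPotential n l r) (-gegenbauerPotential (n + 1) l r u) u := by
  have deriv_term (k : ℕ) : HasDerivAt (fun u => gegenbauerCoeff n k * gegenbauerMonomial n l r k u)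
      (-(gegenbauerCoeff n k * gegenbauerMonomial (n + 1) l r k u + 2 * ((n : ℝ) - 2 * k)
        * gegenbauerCoeff n k * gegenbauerMonomial (n + 1) l r (k + 1) u)) u := by
    rcases lt_or_ge n (2 * k) with h | h
    · simpa [gegenbauerCoeff_eq_zero h] using hasDerivAt_const u (0 : ℝ)
    · have hk : (2 : ℝ) * k ≤ n := by exact_mod_cast h
      have hk_nonneg : (0 : ℝ) ≤ k := k.cast_nonneg
      refine ((hasDerivAt_gegenbauerMonomial h ?_ hr).const_mul _).congr_deriv (by ring)
      rcases hk_nonneg.eq_or_lt with _ | _ <;> exact ne_of_gt (by linarith)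
  have shift : ∑ k ∈ Finset.range (n + 1), gegenbauerCoeff n k * gegenbauerMonomial (n + 1) l r k u
      = ∑ k ∈ Finset.range (n + 1),
          gegenbauerCoeff n (k + 1) * gegenbauerMonomial (n + 1) l r (k + 1) u
        + gegenbauerCoeff n 0 * gegenbauerMonomial (n + 1) l r 0 u := by
    rw [← Finset.sum_range_succ'
        (fun k => gegenbauerCoeff n k * gegenbauerMonomial (n + 1) l r k u),
      Finset.sum_range_succ _ (n + 1), gegenbauerCoeff_eq_zero (k := n + 1) (by lia), zero_mul,
      add_zero]
  refine (HasDerivAt.fun_sum fun k _ => deriv_term k).congr_deriv ?_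
  rw [Finset.sum_neg_distrib, Finset.sum_add_distrib, shift, gegenbauerPotential,
    Finset.sum_range_succ' (n := n + 1), gegenbauerCoeff_zero, gegenbauerCoeff_zero,
    add_right_comm, ← Finset.sum_add_distrib]
  simp only [gegenbauerCoeff_succ_succ, add_mul]

lemma gegenbauerPotential_eq_gegenbauerCt (n : ℕ) (l : ℝ) {r u w : ℝ} (hw : 0 < w)
    (hwr : u ^ 2 + 4 * r = w ^ 2) :
    gegenbauerPotential n l r u
      = n.factorial * w ^ (-(2 * l + n)) * gegenbauerCt n l (u / w) := by
  rw [gegenbauerPotential, gegenbauerCt, Finset.mul_sum]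
  symm
  refine (Finset.sum_congr rfl fun k hk => ?_).trans
    (Finset.sum_subset (Finset.range_mono (by lia)) fun k _ hk => ?_)
  · have hkn : 2 * k ≤ n := by
      have := Finset.mem_range.1 hk
      lia
    have rpow_sq : (w ^ 2) ^ (-(l + n - k)) = w ^ (-(2 * l + n)) / w ^ (n - 2 * k) := by
      rw [← rpow_natCast w 2, ← rpow_mul hw.le, ← rpow_natCast w (n - 2 * k), ← rpow_sub hw]
      push_cast [hkn]
      ring_nf
    rw [gegenbauerCoeff_eq_div hkn, gegenbauerMonomial, hwr, rpow_sq, ← mul_div_assoc, div_pow]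
    field_simp
  · rw [gegenbauerCoeff_eq_zero (by have := Finset.mem_range.not.1 hk; lia), zero_mul]

lemma gegenbauerPotential_zero (l r u : ℝ) :
    gegenbauerPotential 0 l r u = Gamma l * (u ^ 2 + 4 * r) ^ (-l) := by
  simp [gegenbauerPotential, gegenbauerMonomial, gegenbauerCoeff_zero]

lemma gegenbauerPotential_one (l r u : ℝ) :
    gegenbauerPotential 1 l r u = 2 * Gamma (l + 1) * (u * (u ^ 2 + 4 * r) ^ (-(l + 1))) := by
  simp [gegenbauerPotential, gegenbauerMonomial, Finset.sum_range_succ, gegenbauerCoeff_zero,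
    gegenbauerCoeff_eq_zero]
  ring

/-! ### The Bessel product integral -/

/-- The integral `∫₀^∞ h_α(z) z^β C_α(-rz) C_β(-sz) dz`, where `h_α` is the Macdonald integral: the
integral of `K_α(x) J_α(√r x) J_β(√s x) x^(β+1)` in the variable `z = x² / 4`, up to a constant. -/
def besselProductIntegral (α β r s : ℝ) : ℝ :=
  ∫ z in Ioi 0, macdonaldIntegral α z * z ^ β * besselClifford α (-(r * z))
    * besselClifford β (-(s * z))

section

variable {α β r s : ℝ}

lemma hasDerivAt_besselProductIntegral (hα : -1 / 2 ≤ α) (hβ : -1 / 2 ≤ β) (hαβ : -1 < α + β)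
    (hr : 0 ≤ r) (hs : 0 < s) :
    HasDerivAt (besselProductIntegral α β r) (-besselProductIntegral α (β + 1) r s) s := by
  have mul_weight : EqOn
      (fun z => macdonaldIntegral α z * z ^ (β + 1) * besselClifford α (-(r * z)))
      (fun z => z * (macdonaldIntegral α z * z ^ β * besselClifford α (-(r * z)))) (Ioi 0) :=
    fun z (hz : 0 < z) => by
      simp only [rpow_add_one hz.ne']
      ring
  have integrable_mul_rpow {p : ℝ} (hp : β ≤ p) := integrableOn_mul_besselClifford
    (integrableOn_macdonaldIntegral_mul_rpow (β := α) (p := p) (by linarith) (by linarith)) hα hr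
  refine (hasDerivAt_integral_mul_besselClifford (integrable_mul_rpow le_rfl)
    ((integrable_mul_rpow (by linarith)).congr_fun mul_weight measurableSet_Ioi) hβ
    hs).congr_deriv ?_
  exact congrArg Neg.neg (setIntegral_congr_fun measurableSet_Ioi fun z hz =>
    congrArg (· * besselClifford (β + 1) (-(s * z))) (mul_weight hz).symm)

lemma besselProductIntegral_eq_laplace (hα : -1 / 2 ≤ α) (hβ : -1 / 2 ≤ β) (hαβ : -1 < α + β)
    (hr : 0 ≤ r) (hs : 0 ≤ s) :
    besselProductIntegral α β r s = ∫ t in Ioi 0, exp (-t) * t ^ (α + β) *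
      ∫ z in Ioi 0, exp (-z) * z ^ β * besselClifford α (-(r * t * z))
        * besselClifford β (-(s * t * z)) := by
  have abs_le (z : ℝ) (hz : 0 < z) : |besselClifford α (-(r * z)) * besselClifford β (-(s * z))|
      ≤ (Gamma (α + 1))⁻¹ * (Gamma (β + 1))⁻¹ := by
    have Gamma_pos : 0 < Gamma (α + 1) := Gamma_pos_of_pos (by linarith)
    rw [abs_mul]
    gcongr <;> exact abs_besselClifford_le (by assumption) (neg_nonpos.2 (by positivity))
  simp only [besselProductIntegral, mul_assoc (_ * _ ^ _)]
  rw [integral_macdonaldIntegral_mul_rpow_mul (by linarith) hαβ (by fun_prop) abs_le]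
  simp only [mul_assoc]

lemma laplace_discriminant_eq (r s : ℝ) :
    (1 + s + r) ^ 2 - 4 * (s * r) = (s + 1 - r) ^ 2 + 4 * r := by
  ring

lemma laplace_discriminant_pos (hr : 0 ≤ r) (hs : 0 ≤ s) : 4 * (s * r) < (1 + s + r) ^ 2 := by
  nlinarith [sq_nonneg (s - r)]

lemma besselProductIntegral_self (hα : -1 / 2 < α) (hr : 0 ≤ r) (hs : 0 ≤ s) :
    besselProductIntegral α α r s
      = 2 ^ (2 * α) / √π * gegenbauerPotential 0 (α + 1 / 2) r (s + 1 - r) := by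
  rw [besselProductIntegral_eq_laplace hα.le hα.le (by linarith) hr hs, gegenbauerPotential_zero,
    ← laplace_discriminant_eq, ← mul_assoc,
    ← integral_rpow_two_mul_mul_exp_neg_mul_besselClifford hα (by linarith) (by positivity)
      (laplace_discriminant_pos hr hs)]
  refine setIntegral_congr_fun measurableSet_Ioi fun t (ht : 0 < t) => ?_
  change _ * weberIntegral α (s * t) (r * t) = _
  rw [weberIntegral_eq hα.le (by positivity) (by positivity), two_mul,
    show -((1 + s + r) * t) = -t + (-(s * t) - r * t) by ring, exp_add _ (_ - _),
    show s * t * (r * t) = s * r * t ^ 2 by ring]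
  ring

lemma besselProductIntegral_add_one_eq_laplace (hα : -1 / 2 ≤ α) (hr : 0 ≤ r) (hs : 0 ≤ s) :
    besselProductIntegral α (α + 1) r s = ∫ t in Ioi 0,
      (t ^ (2 * α + 1) * exp (-((1 + s + r) * t)) * besselClifford α (s * r * t ^ 2)
        - r * (t ^ (2 * (α + 1)) * exp (-((1 + s + r) * t))
          * besselClifford (α + 1) (s * r * t ^ 2))) := by
  rw [besselProductIntegral_eq_laplace hα (by linarith) (by linarith) hr hs]
  refine setIntegral_congr_fun measurableSet_Ioi fun t (ht : 0 < t) => ?_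
  rw [integral_exp_neg_mul_besselClifford_mul_succ hα (by positivity) (by positivity),
    weberIntegral_eq hα (by positivity) (by positivity),
    weberIntegral_eq (by linarith) (by positivity) (by positivity),
    show -((1 + s + r) * t) = -t + (-(s * t) - r * t) by ring, exp_add _ (_ - _),
    show s * t * (r * t) = s * r * t ^ 2 by ring, show α + (α + 1) = 2 * α + 1 by ring,
    show 2 * (α + 1) = 2 * α + 1 + 1 by ring, rpow_add_one ht.ne' (2 * α + 1)]
  ring

lemma besselProductIntegral_add_one (hα : -1 / 2 ≤ α) (hr : 0 ≤ r) (hs : 0 ≤ s) :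
    besselProductIntegral α (α + 1) r s
      = 2 ^ (2 * α) / √π * gegenbauerPotential 1 (α + 1 / 2) r (s + 1 - r) := by
  have hA : 0 < 1 + s + r := by linarith
  have hq : 0 ≤ s * r := by positivity
  have hqA := laplace_discriminant_pos hr hs
  have laplace_odd := integral_rpow_two_mul_add_one_mul_exp_neg_mul_besselClifford
    (show -1 < α by linarith) hA hq hqA
  have laplace_even := integral_rpow_two_mul_mul_exp_neg_mul_besselClifford
    (show -1 / 2 < α + 1 by linarith) hA hq hqA
  rw [show α + 1 + 1 / 2 = α + 3 / 2 by ring] at laplace_even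
  have := sub_pos.2 hqA
  have Gamma_pos : 0 < Gamma (α + 3 / 2) := Gamma_pos_of_pos (by linarith)
  rw [besselProductIntegral_add_one_eq_laplace hα hr hs,
    integral_sub (.of_integral_ne_zero (by rw [laplace_odd]; positivity))
      (.const_mul (.of_integral_ne_zero (by rw [laplace_even]; positivity)) r),
    integral_const_mul, laplace_odd, laplace_even, laplace_discriminant_eq,
    gegenbauerPotential_one, show 2 * (α + 1) = 2 * α + 1 + 1 by ring,
    rpow_add_one two_ne_zero (2 * α + 1), rpow_add_one two_ne_zero (2 * α),
    show α + 1 / 2 + 1 = α + 3 / 2 by ring]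
  ring

lemma besselProductIntegral_eq_gegenbauerPotential_succ {n : ℕ} {c : ℝ} (hα : -1 / 2 ≤ α)
    (hαn : -1 < α + (α + n)) (hr : 0 ≤ r)
    (ih : ∀ s, 0 < s →
      besselProductIntegral α (α + n) r s = c * gegenbauerPotential n (α + 1 / 2) r (s + 1 - r))
    (hs : 0 < s) :
    besselProductIntegral α (α + n + 1) r s
      = c * gegenbauerPotential (n + 1) (α + 1 / 2) r (s + 1 - r) := by
  have : (0 : ℝ) ≤ n := n.cast_nonneg
  have deriv_integral :=
    hasDerivAt_besselProductIntegral hα (show -1 / 2 ≤ α + n by linarith) hαn hr hs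
  have hQ : 0 < (s + 1 - r) ^ 2 + 4 * r := by
    rw [← laplace_discriminant_eq]
    exact sub_pos.2 (laplace_discriminant_pos hr hs.le)
  have deriv_potential : HasDerivAt (fun s => c * gegenbauerPotential n (α + 1 / 2) r (s + 1 - r))
      (c * -gegenbauerPotential (n + 1) (α + 1 / 2) r (s + 1 - r)) s :=
    (((hasDerivAt_gegenbauerPotential (by linarith) (by linarith) hQ).comp_sub_const (s + 1)
      r).comp_add_const s 1).const_mul c
  have deriv_eq := deriv_integral.unique
    (deriv_potential.congr_of_eventuallyEq (eventually_of_mem (Ioi_mem_nhds hs) ih))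
  linarith

lemma besselProductIntegral_add_natCast {n : ℕ} (hα : -1 / 2 ≤ α) (hαn : -1 / 2 < α + n)
    (hr : 0 ≤ r) (hs : 0 < s) :
    besselProductIntegral α (α + n) r s
      = 2 ^ (2 * α) / √π * gegenbauerPotential n (α + 1 / 2) r (s + 1 - r) := by
  induction n generalizing s with
  | zero => simpa using besselProductIntegral_self (by simpa using hαn) hr hs.le
  | succ n ih =>
    rcases eq_or_ne n 0 with rfl | hn
    · simpa using besselProductIntegral_add_one hα hr hs.le
    · have one_le : (1 : ℝ) ≤ n := mod_cast Nat.one_le_iff_ne_zero.2 hn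
      rw [Nat.cast_succ, ← add_assoc]
      exact besselProductIntegral_eq_gegenbauerPotential_succ hα (by linarith) hr
        (fun s hs => ih (by linarith) hs) hs

end

lemma integral_mul_comp_sq_div_four (g : ℝ → ℝ) :
    ∫ x in Ioi 0, x * g (x ^ 2 / 4) = 2 * ∫ z in Ioi 0, g z := by
  have scale := integral_comp_mul_right_Ioi g 0 (inv_pos.2 (show (0 : ℝ) < 4 by norm_num))
  have square := integral_comp_rpow_Ioi_of_pos (g := fun z => g (z * 4⁻¹)) two_pos
  rw [zero_mul, inv_inv, smul_eq_mul] at scale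
  rw [scale] at square
  simp only [show (2 : ℝ) - 1 = 1 by norm_num, rpow_one, rpow_two, smul_eq_mul, mul_assoc,
    integral_const_mul, ← div_eq_mul_inv] at square
  linarith

lemma integral_besselK_mul_besselJ_mul_besselJ (α β : ℝ) {a b : ℝ} (ha : 0 < a) (hb : 0 < b) :
    ∫ x in Ioi 0, besselK α x * besselJ β (x * a) * besselJ α (x * b) * x ^ (β + 1)
      = 2 ^ β * a ^ β * b ^ α * besselProductIntegral α β (b ^ 2) (a ^ 2) := by
  rw [← mul_div_cancel_left₀ (besselProductIntegral _ _ _ _) two_ne_zero, besselProductIntegral,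
    ← integral_mul_comp_sq_div_four, mul_div_left_comm, ← integral_mul_const]
  refine setIntegral_congr_fun measurableSet_Ioi fun x (hx : 0 < x) => ?_
  have : 0 < (x / 2) ^ α := by positivity
  have sq_rpow : 2 ^ β * (x ^ 2 / 4) ^ β = (x / 2) ^ β * x ^ β := by
    rw [← mul_rpow two_pos.le (by positivity), ← mul_rpow (by positivity) hx.le]
    ring_nf
  rw [besselK_eq_macdonaldIntegral _ hx, besselJ_eq_besselClifford (by positivity),
    besselJ_eq_besselClifford (by positivity), mul_div_right_comm x a, mul_div_right_comm x b,
    mul_rpow (by positivity) ha.le, mul_rpow (by positivity) hb.le, rpow_add_one hx.ne',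
    rpow_neg (by positivity), show (x * a) ^ 2 / 4 = a ^ 2 * (x ^ 2 / 4) by ring,
    show (x * b) ^ 2 / 4 = b ^ 2 * (x ^ 2 / 4) by ring]
  generalize besselClifford α _ = Cα, besselClifford β _ = Cβ
  field_simp
  linear_combination (-macdonaldIntegral α (x ^ 2 / 4) * Cα * Cβ) * sq_rpow

lemma integral_besselK_mul_besselJ_add_natCast_mul_besselJ {α a b w : ℝ} {n : ℕ}
    (hα : -1 / 2 ≤ α) (hαn : -1 / 2 < α + n) (ha : 0 < a) (hb : 0 < b) (hw : 0 < w)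
    (habw : (a ^ 2 + 1 - b ^ 2) ^ 2 + 4 * b ^ 2 = w ^ 2) :
    ∫ x in Ioi 0, besselK α x * besselJ (α + n) (x * a) * besselJ α (x * b) * x ^ (α + n + 1)
      = 2 ^ (3 * α + n) * n.factorial / √π * a ^ (α + n) * b ^ α * w ^ (-(2 * α + n + 1))
        * gegenbauerCt n (α + 1 / 2) ((a ^ 2 + 1 - b ^ 2) / w) := by
  rw [integral_besselK_mul_besselJ_mul_besselJ _ _ ha hb,
    besselProductIntegral_add_natCast hα hαn (by positivity) (by positivity),
    gegenbauerPotential_eq_gegenbauerCt n _ hw habw, show 3 * α + n = α + n + 2 * α by ring,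
    rpow_add two_pos (α + n), show 2 * (α + 1 / 2) + n = 2 * α + n + 1 by ring]
  ring

lemma sin_div_sq_add_one_sub_sin_div_sq {ϑ φ : ℝ} (h : cos ϑ + cos φ ≠ 0) :
    (sin ϑ / (cos ϑ + cos φ)) ^ 2 + 1 - (sin φ / (cos ϑ + cos φ)) ^ 2
      = 2 * cos φ / (cos ϑ + cos φ) := by
  field_simp
  linear_combination sin_sq_add_cos_sq ϑ - sin_sq_add_cos_sq φ

lemma bottom_layer_constant_eq {c x y : ℝ} (α : ℝ) (n : ℕ) (hc : 0 < c) (hx : 0 ≤ x) (hy : 0 ≤ y) :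
    2 ^ (3 * α + n) * n.factorial / √π * (x / c) ^ (α + n) * (y / c) ^ α
        * (2 / c) ^ (-(2 * α + n + 1))
      = 2 ^ (α - 1) * n.factorial / √π * c * x ^ (α + n) * y ^ α := by
  rw [div_rpow hx hc.le, div_rpow hy hc.le, div_rpow two_pos.le hc.le, rpow_neg hc.le,
    show 2 * α + n + 1 = (α + n) + α + 1 by ring, rpow_add_one hc.ne', rpow_add hc (α + n),
    show (2 : ℝ) ^ (α - 1) = 2 ^ (3 * α + n) * 2 ^ (-(α + n + α + 1)) by
      rw [← rpow_add two_pos]; ring_nf]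
  field_simp

theorem bottom_layer_general {μ ν ϑ φ : ℝ} {n : ℕ} (hν : -1 ≤ ν) (hμ : -1 < μ)
    (hμν : μ = ν + 2 * n) (hϑ : ϑ ∈ Ioo 0 π) (hφ : φ ∈ Ioo 0 π) (hpos : 0 < cos ϑ + cos φ) :
    ∫ x in Ioi 0, besselK (ν / 2) x * besselJ (μ / 2) (x * sin ϑ / (cos ϑ + cos φ))
        * besselJ (ν / 2) (x * sin φ / (cos ϑ + cos φ)) * x ^ ((μ + 2) / 2)
      = 2 ^ ((ν - 2) / 2) * Gamma ((μ - ν + 2) / 2) / √π * (cos ϑ + cos φ)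
        * sin ϑ ^ (μ / 2) * sin φ ^ (ν / 2) * gegenbauerCt n ((ν + 1) / 2) (cos φ) := by
  have sin_ϑ_pos := sin_pos_of_mem_Ioo hϑ
  have sin_φ_pos := sin_pos_of_mem_Ioo hφ
  have discriminant := sin_div_sq_add_one_sub_sin_div_sq hpos.ne'
  have key := integral_besselK_mul_besselJ_add_natCast_mul_besselJ (α := ν / 2) (n := n)
    (w := 2 / (cos ϑ + cos φ)) (by linarith) (by linarith) (div_pos sin_ϑ_pos hpos)
    (div_pos sin_φ_pos hpos) (by positivity) (by
      rw [discriminant]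
      field_simp
      linear_combination 4 * sin_sq_add_cos_sq φ)
  rw [discriminant, bottom_layer_constant_eq _ _ hpos sin_ϑ_pos.le sin_φ_pos.le,
    div_div_div_cancel_right₀ hpos.ne', mul_div_cancel_left₀ _ two_ne_zero] at key
  simp only [mul_div_assoc, show μ / 2 = ν / 2 + n by linarith,
    show (μ + 2) / 2 = ν / 2 + n + 1 by linarith]
  rw [key, show (ν - 2) / 2 = ν / 2 - 1 by ring, show (μ - ν + 2) / 2 = n + 1 by linarith,
    Gamma_nat_eq_factorial, show (ν + 1) / 2 = ν / 2 + 1 / 2 by ring]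
  ring

lemma IntCond.neg_one_lt {μ ν : ℤ} (h : IntCond μ ν) : -1 < μ := by
  obtain ⟨hν, hνμ, -, hne⟩ := h
  lia

lemma IntCond.cast_eq_add_two_mul {μ ν : ℤ} (h : IntCond μ ν) :
    (μ : ℝ) = ν + 2 * ((μ - ν) / 2).toNat := by
  obtain ⟨-, hνμ, ⟨m, hm⟩, -⟩ := h
  exact_mod_cast (show μ = ν + 2 * ((μ - ν) / 2).toNat by lia)

end

/-- **Bottom layer (`j = 0`).** Integral formula for the `K`-Bessel function against two
`J`-Bessel functions. -/
theorem bottom_layer (μ ν : ℤ) (hcond : IntCond μ ν)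
    (ϑ φ : ℝ) (hϑ : ϑ ∈ Set.Ioo (0 : ℝ) Real.pi) (hφ : φ ∈ Set.Ioo (0 : ℝ) Real.pi)
    (hpos : Real.cos ϑ + Real.cos φ > 0) :
    ∫ x in Set.Ioi (0 : ℝ),
        besselK ((ν : ℝ) / 2) x
          * besselJ ((μ : ℝ) / 2) (x * Real.sin ϑ / (Real.cos ϑ + Real.cos φ))
          * besselJ ((ν : ℝ) / 2) (x * Real.sin φ / (Real.cos ϑ + Real.cos φ))
          * x ^ (((μ : ℝ) + 2) / 2)
      = (2 : ℝ) ^ (((ν : ℝ) - 2) / 2) * Real.Gamma (((μ : ℝ) - ν + 2) / 2) / Real.sqrt Real.pi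
          * (Real.cos ϑ + Real.cos φ)
          * Real.sin ϑ ^ ((μ : ℝ) / 2) * Real.sin φ ^ ((ν : ℝ) / 2)
          * gegenbauerCt (((μ - ν) / 2).toNat) (((ν : ℝ) + 1) / 2) (Real.cos φ) := by
  exact bottom_layer_general (mod_cast hcond.1) (mod_cast hcond.neg_one_lt)
    hcond.cast_eq_add_two_mul hϑ hφ hpos
end

section
/- (Small-x asymptotics of Λ_j^{μ,ν} for ν > 0) Assume the integrality condition on (μ,ν) with ν > 0 and let j ∈ ℕ. Then lim_{x→0+} x^ν Λ_j^{μ,ν}(x) = 2^{ν−1} Γ(ν/2) · Γ(j+(μ−ν+2)/2)/(j! Γ((μ+2)/2) Γ((μ−ν+2)/2)). -/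
open MeasureTheory Real Filter Set Metric

/-!
Along `x → 0⁺`, the normalized function `y^(2α) K̃_α(2y)` is a smooth function of `y`, `y^(2α)` and
`y^(2α) log y` (the logarithm occurs only for integral `α`, where `K_α` is a derivative with respect
to the order). Hence, with `y = x/2`, so is `y^ν G^{μ,ν}(t, x)`, jointly with `t` near `0`, and
its Taylor coefficients in `t` converge to those of its value at `(0, 0, 0)`. There only the leading
coefficient `Γ(ν/2)/2` of `K̃` and the value `1/Γ(μ/2+1)` of `Ĩ` survive, multiplied by
`(1-t)^(-(μ-ν+2)/2)`, whose Taylor coefficients are Pochhammer symbols.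
-/

open scoped Topology ContDiff Nat
open Function

/-- The reciprocal Gamma function `1/Γ`. It is entire: the junk value `Γ = 0` at the poles of `Γ`
yields `1/Γ = 0` there, which is the correct value. -/
noncomputable def rGamma (s : ℝ) : ℝ := (Real.Gamma s)⁻¹

theorem contDiff_rGamma {n : WithTop ℕ∞} : ContDiff ℝ n rGamma := by
  have hre : rGamma = fun s : ℝ => ((Complex.Gamma s)⁻¹).re := by
    ext s
    rw [rGamma, Complex.Gamma_ofReal, ← Complex.ofReal_inv, Complex.ofReal_re]
  rw [hre]
  exact Complex.differentiable_one_div_Gamma.contDiff.real_of_complex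

theorem differentiable_rGamma : Differentiable ℝ rGamma :=
  contDiff_rGamma.differentiable one_ne_zero

theorem rGamma_eq_mul_add_one (s : ℝ) : rGamma s = s * rGamma (s + 1) := by
  rcases eq_or_ne s 0 with rfl | hs
  · simp [rGamma]
  · rw [rGamma, rGamma, Real.Gamma_add_one hs]
    field_simp

theorem deriv_rGamma_eq_add_one (s : ℝ) :
    deriv rGamma s = rGamma (s + 1) + s * deriv rGamma (s + 1) := by
  have h := (hasDerivAt_id s).mul ((differentiable_rGamma (s + 1)).hasDerivAt.comp_add_const s 1)
  rw [show id * (fun s => rGamma (s + 1)) = rGamma from (funext rGamma_eq_mul_add_one).symm] at h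
  simpa using h.deriv

theorem rGamma_neg_natCast (n : ℕ) : rGamma (-n) = 0 := by
  simp [rGamma, Real.Gamma_neg_nat_eq_zero]

theorem deriv_rGamma_neg_natCast (n : ℕ) : deriv rGamma (-n) = (-1) ^ n * n ! := by
  induction n with
  | zero => rw [deriv_rGamma_eq_add_one]; simp [rGamma]
  | succ n ih =>
    have hshift : -((n + 1 : ℕ) : ℝ) + 1 = -n := by push_cast; ring
    rw [deriv_rGamma_eq_add_one, hshift, ih, rGamma_neg_natCast, Nat.factorial_succ]
    push_cast
    ring

theorem abs_rGamma_add_one_le_one {s : ℝ} (hs : 1 ≤ s) : |rGamma (s + 1)| ≤ 1 := by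
  have hGamma : 1 ≤ Real.Gamma (s + 1) :=
    calc 1 = Real.Gamma 2 := Real.Gamma_two.symm
      _ ≤ Real.Gamma (s + 1) := Real.Gamma_strictMonoOn_Ici.monotoneOn self_mem_Ici
        (mem_Ici.2 (by linarith)) (by linarith)
  rw [rGamma, abs_inv, abs_of_pos (by linarith)]
  exact inv_le_one_of_one_le₀ hGamma

theorem abs_deriv_rGamma_add_one_le {s : ℝ} (hs : 1 ≤ s) :
    |deriv rGamma (s + 1)| ≤ |deriv rGamma s| + 1 :=
  calc |deriv rGamma (s + 1)| ≤ s * |deriv rGamma (s + 1)| :=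
        le_mul_of_one_le_left (abs_nonneg _) hs
    _ = |deriv rGamma s - rGamma (s + 1)| := by
        rw [deriv_rGamma_eq_add_one s, add_sub_cancel_left, abs_mul,
          abs_of_pos (zero_lt_one.trans_le hs)]
    _ ≤ |deriv rGamma s| + |rGamma (s + 1)| := abs_sub _ _
    _ ≤ |deriv rGamma s| + 1 := by gcongr; exact abs_rGamma_add_one_le_one hs

theorem exists_abs_natCast_add_le {f : ℝ → ℝ} (hf : Continuous f)
    (hstep : ∀ s, 1 ≤ s → |f (s + 1)| ≤ |f s| + 1) (s₀ : ℝ) :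
    ∃ C, ∀ (m : ℕ), ∀ s ∈ Icc (s₀ - 1) (s₀ + 1), |f (m + s)| ≤ C + m := by
  obtain ⟨M, hM⟩ := exists_nat_ge (2 - s₀)
  obtain ⟨C, hC⟩ := (isCompact_Icc (a := s₀ - 1) (b := s₀ + 1 + M)).exists_bound_of_continuousOn
    hf.continuousOn
  refine ⟨C, fun m s ⟨hs₁, hs₂⟩ => ?_⟩
  have hsmall : ∀ k : ℕ, k ≤ M → |f (k + s)| ≤ C + k := fun k hk => by
    have hk' : (k : ℝ) ≤ M := mod_cast hk
    exact (hC _ ⟨by linarith [k.cast_nonneg (α := ℝ)], by linarith⟩).trans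
      (le_add_of_nonneg_right k.cast_nonneg)
  rcases le_total m M with hm | hm
  · exact hsmall m hm
  · induction m, hm using Nat.le_induction with
    | base => exact hsmall M le_rfl
    | succ k hk ih =>
      have hk' : (M : ℝ) ≤ k := mod_cast hk
      have h := hstep (k + s) (by linarith)
      rw [Nat.cast_add_one, add_right_comm]
      linarith

/-- The exponential generating function `∑ cₘ wᵐ / m!` of a sequence of coefficients. Linear growth
of `c` makes it an entire function. -/
noncomputable def egf (c : ℕ → ℝ) (w : ℝ) : ℝ := ∑' m, c m / m ! * w ^ m

theorem egf_zero (c : ℕ → ℝ) : egf c 0 = c 0 := by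
  rw [egf, tsum_eq_single 0 fun m hm => by simp [hm]]
  simp

theorem summable_add_natCast_div_factorial_mul_pow (C r : ℝ) :
    Summable fun m : ℕ => (C + m) / m ! * r ^ m := by
  have hexp : Summable fun m : ℕ => r ^ m / m ! := Real.summable_pow_div_factorial r
  have hlin : Summable fun m : ℕ => m * (r ^ m / m !) := by
    rw [← summable_nat_add_iff 1]
    refine (hexp.mul_left r).congr fun m => ?_
    rw [Nat.factorial_succ]
    push_cast
    field_simp
    ring
  exact ((hexp.mul_left C).add hlin).congr fun m => by ring

section LinearGrowth

variable {c : ℕ → ℝ} {C : ℝ}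

theorem abs_div_factorial_mul_pow_le (hc : ∀ m, |c m| ≤ C + m) (w : ℝ) (m : ℕ) :
    |c m / m ! * w ^ m| ≤ (C + m) / m ! * |w| ^ m := by
  rw [abs_mul, abs_div, Nat.abs_cast, abs_pow]
  gcongr
  exact hc m

theorem summable_egf (hc : ∀ m, |c m| ≤ C + m) (w : ℝ) : Summable fun m => c m / m ! * w ^ m :=
  .of_norm_bounded (summable_add_natCast_div_factorial_mul_pow C |w|)
    (abs_div_factorial_mul_pow_le hc w)

theorem contDiff_egf {n : WithTop ℕ∞} (hc : ∀ m, |c m| ≤ C + m) : ContDiff ℝ n (egf c) := by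
  set p := FormalMultilinearSeries.ofScalars ℝ fun m => c m / m ! with hp
  have hradius : p.radius = ⊤ := p.radius_eq_top_of_summable_norm fun r => by
    simpa [hp, FormalMultilinearSeries.ofScalars_norm, abs_mul] using (summable_egf hc r).norm
  have hsum : p.sum = egf c := funext (FormalMultilinearSeries.ofScalars_sum_eq _)
  have h := (p.hasFPowerSeriesOnBall (by simp [hradius])).analyticOnNhd
  rw [hradius, Metric.eball_top, hsum] at h
  exact h.contDiff

end LinearGrowth

/-- The regularized hypergeometric function `₀F̃₁(; s; w) = ∑ wᵐ / (m! Γ(m + s))`, in terms of which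
`I_α(x) = (x/2)^α ₀F̃₁(; α + 1; (x/2)²)`. -/
noncomputable def hypZeroOne (s w : ℝ) : ℝ := egf (fun m => rGamma (m + s)) w

/-- The derivative of `₀F̃₁(; s; w)` with respect to the parameter `s`; it enters
`K_n` for integral `n` through `∂I_β/∂β`. -/
noncomputable def hypZeroOneDeriv (s w : ℝ) : ℝ := egf (fun m => deriv rGamma (m + s)) w

theorem exists_abs_rGamma_natCast_add_le (s₀ : ℝ) :
    ∃ C, ∀ (m : ℕ), ∀ s ∈ Icc (s₀ - 1) (s₀ + 1), |rGamma (m + s)| ≤ C + m :=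
  exists_abs_natCast_add_le differentiable_rGamma.continuous
    (fun _ hs => (abs_rGamma_add_one_le_one hs).trans (le_add_of_nonneg_left (abs_nonneg _))) s₀

theorem exists_abs_deriv_rGamma_natCast_add_le (s₀ : ℝ) :
    ∃ C, ∀ (m : ℕ), ∀ s ∈ Icc (s₀ - 1) (s₀ + 1), |deriv rGamma (m + s)| ≤ C + m :=
  exists_abs_natCast_add_le (contDiff_rGamma.continuous_deriv_one)
    (fun _ => abs_deriv_rGamma_add_one_le) s₀

theorem summable_hypZeroOne (s w : ℝ) : Summable fun m : ℕ => rGamma (m + s) / m ! * w ^ m := by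
  obtain ⟨C, hC⟩ := exists_abs_rGamma_natCast_add_le s
  exact summable_egf (fun m => hC m s ⟨by linarith, by linarith⟩) w

theorem contDiff_hypZeroOne {n : WithTop ℕ∞} (s : ℝ) : ContDiff ℝ n (hypZeroOne s) := by
  obtain ⟨C, hC⟩ := exists_abs_rGamma_natCast_add_le s
  exact contDiff_egf fun m => hC m s ⟨by linarith, by linarith⟩

theorem contDiff_hypZeroOneDeriv {n : WithTop ℕ∞} (s : ℝ) :
    ContDiff ℝ n (hypZeroOneDeriv s) := by
  obtain ⟨C, hC⟩ := exists_abs_deriv_rGamma_natCast_add_le s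
  exact contDiff_egf fun m => hC m s ⟨by linarith, by linarith⟩

theorem hasDerivAt_hypZeroOne (s w : ℝ) :
    HasDerivAt (fun s => hypZeroOne s w) (hypZeroOneDeriv s w) s := by
  obtain ⟨C, hC⟩ := exists_abs_deriv_rGamma_natCast_add_le s
  simp only [hypZeroOne, hypZeroOneDeriv, egf]
  refine hasDerivAt_tsum_of_isPreconnected (t := Ioo (s - 1) (s + 1)) (y₀ := s)
    (g' := fun (m : ℕ) s => deriv rGamma (m + s) / m ! * w ^ m)
    (summable_add_natCast_div_factorial_mul_pow C |w|) isOpen_Ioo isPreconnected_Ioo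
    (fun m r _ => ?_) (fun m r hr => ?_) (y := s) ?_ (summable_hypZeroOne s w)
    ?_
  · exact (((differentiable_rGamma (m + r)).hasDerivAt.comp_const_add (m : ℝ) r).div_const
      _).mul_const _
  · rw [Real.norm_eq_abs, abs_mul, abs_div, Nat.abs_cast, abs_pow]
    gcongr
    exact hC m r (Ioo_subset_Icc_self hr)
  all_goals simp

theorem hypZeroOne_zero (s : ℝ) : hypZeroOne s 0 = rGamma s := by
  simp [hypZeroOne, egf_zero]

theorem hypZeroOneDeriv_zero (s : ℝ) : hypZeroOneDeriv s 0 = deriv rGamma s := by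
  simp [hypZeroOneDeriv, egf_zero]

-- The first `n` coefficients vanish since `1/Γ` does at the nonpositive integers.
theorem hypZeroOne_one_sub_natCast (n : ℕ) (w : ℝ) :
    hypZeroOne (1 - n) w = w ^ n * hypZeroOne (1 + n) w := by
  have hvanish : ∀ m ∈ Finset.range n, rGamma (m + (1 - n)) / m ! * w ^ m = 0 := by
    intro m hm
    have hm' := Finset.mem_range.1 hm
    have hneg : (m : ℝ) + (1 - n) = -(n - 1 - m : ℕ) := by
      rw [Nat.sub_sub, Nat.cast_sub (by omega)]
      push_cast
      ring
    rw [hneg, rGamma_neg_natCast, zero_div, zero_mul]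
  simp only [hypZeroOne, egf]
  rw [← (summable_hypZeroOne (1 - n) w).sum_add_tsum_nat_add n, Finset.sum_eq_zero hvanish,
    zero_add, ← tsum_mul_left]
  refine tsum_congr fun m => ?_
  have hleft : ((m + n : ℕ) : ℝ) + (1 - n) = m + 1 := by push_cast; ring
  have hright : (m : ℝ) + (1 + n) = (m + n : ℕ) + 1 := by push_cast; ring
  rw [hleft, hright, rGamma, rGamma, Real.Gamma_nat_eq_factorial, Real.Gamma_nat_eq_factorial,
    pow_add]
  field_simp

theorem rpow_neg_mul_hypZeroOne_one_sub_natCast {y : ℝ} (hy : 0 < y) (n : ℕ) :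
    y ^ (-n : ℝ) * hypZeroOne (1 - n) (y ^ 2) = y ^ (n : ℝ) * hypZeroOne (1 + n) (y ^ 2) := by
  rw [hypZeroOne_one_sub_natCast, Real.rpow_neg hy.le, Real.rpow_natCast, pow_right_comm]
  field_simp

theorem besselIt_eq_hypZeroOne (α x : ℝ) :
    besselIt α x = hypZeroOne (α + 1) ((x / 2) ^ 2) := by
  simp only [besselIt, hypZeroOne, egf]
  refine tsum_congr fun m => ?_
  rw [rGamma, ← pow_mul, add_assoc, div_eq_mul_inv, mul_inv]
  ring

theorem tendsto_div_of_hasDerivAt {𝕜 : Type*} [NontriviallyNormedField 𝕜]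
    {f g : 𝕜 → 𝕜} {f' g' a : 𝕜}
    (hf : HasDerivAt f f' a) (hg : HasDerivAt g g' a) (hfa : f a = 0) (hga : g a = 0)
    (hg' : g' ≠ 0) : Tendsto (fun x => f x / g x) (𝓝[≠] a) (𝓝 (f' / g')) := by
  refine (hf.tendsto_slope.div hg.tendsto_slope hg').congr' ?_
  filter_upwards [self_mem_nhdsWithin] with x hx
  simp only [Pi.div_apply, slope_def_field, hfa, hga, sub_zero]
  exact div_div_div_cancel_right₀ (sub_ne_zero.2 hx) _ _

section BesselK

variable {x : ℝ}

theorem besselI_eq_rpow_mul_hypZeroOne (hx : 0 < x) (β : ℝ) :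
    besselI β x = (x / 2) ^ β * hypZeroOne (β + 1) ((x / 2) ^ 2) := by
  rw [← besselIt_eq_hypZeroOne, besselIt, ← tsum_mul_left]
  refine tsum_congr fun m => ?_
  rw [add_comm, Real.rpow_add (by positivity), ← mul_div_assoc]
  norm_cast

theorem hasDerivAt_besselI (hx : 0 < x) (β : ℝ) :
    HasDerivAt (fun β => besselI β x)
      ((x / 2) ^ β * (Real.log (x / 2) * hypZeroOne (β + 1) ((x / 2) ^ 2)
        + hypZeroOneDeriv (β + 1) ((x / 2) ^ 2))) β := by
  rw [funext (besselI_eq_rpow_mul_hypZeroOne hx)]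
  have hrpow : HasDerivAt (fun β => (x / 2) ^ β) ((x / 2) ^ β * Real.log (x / 2)) β :=
    (Real.hasStrictDerivAt_const_rpow (by positivity) β).hasDerivAt
  refine (hrpow.mul ((hasDerivAt_hypZeroOne (β + 1) _).comp_add_const β 1)).congr_deriv ?_
  ring

theorem besselK_of_sin_ne_zero (hx : 0 < x) {α : ℝ} (hα : Real.sin (α * π) ≠ 0) :
    besselK α x = π / 2 * (besselI (-α) x - besselI α x) / Real.sin (α * π) := by
  have hcont : Continuous fun β => besselI β x :=
    continuous_iff_continuousAt.2 fun β => (hasDerivAt_besselI hx β).continuousAt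
  have hquot : ContinuousAt
      (fun β => π / 2 * (besselI (-β) x - besselI β x) / Real.sin (β * π)) α :=
    ContinuousAt.div (by fun_prop) (by fun_prop) hα
  exact (hquot.tendsto.mono_left nhdsWithin_le_nhds).limUnder_eq

-- The quotient defining `K_n` is of the form `0/0`, so its limit is a quotient of derivatives.
theorem besselK_natCast (hx : 0 < x) (n : ℕ) :
    besselK n x = (-1) ^ (n + 1) / 2 * ((x / 2) ^ (-n : ℝ) * hypZeroOneDeriv (1 - n) ((x / 2) ^ 2)
      + (x / 2) ^ (n : ℝ) * (2 * Real.log (x / 2) * hypZeroOne (1 + n) ((x / 2) ^ 2)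
        + hypZeroOneDeriv (1 + n) ((x / 2) ^ 2))) := by
  have hzero : besselI (-n) x - besselI n x = 0 := by
    rw [besselI_eq_rpow_mul_hypZeroOne hx, besselI_eq_rpow_mul_hypZeroOne hx]
    simp only [neg_add_eq_sub, add_comm (n : ℝ)]
    exact sub_eq_zero.2 (rpow_neg_mul_hypZeroOne_one_sub_natCast (by positivity) n)
  have hnum := ((hasDerivAt_besselI hx (-n)).comp (n : ℝ) (hasDerivAt_neg _)).sub
    (hasDerivAt_besselI hx n)
  have hsin := ((hasDerivAt_id (n : ℝ)).mul_const π).sin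
  simp only [neg_add_eq_sub, add_comm (n : ℝ) 1, id, Real.cos_nat_mul_pi] at hnum hsin
  have hlim := tendsto_div_of_hasDerivAt hnum hsin hzero (Real.sin_nat_mul_pi n)
    (by simp [Real.pi_ne_zero])
  refine ((hlim.const_mul (π / 2)).congr fun β => (mul_div_assoc ..).symm).limUnder_eq.trans ?_
  have hreflect := rpow_neg_mul_hypZeroOne_one_sub_natCast (half_pos hx) n
  generalize x / 2 = y at hreflect ⊢
  have hpi := Real.pi_ne_zero
  rcases neg_one_pow_eq_or ℝ n with h | h <;> rw [pow_succ (-1) n, h] <;> field_simp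
  · linear_combination -Real.log y * hreflect
  · linear_combination Real.log y * hreflect

end BesselK


/-- The curve `y ↦ (y, y^ν, y^ν log y)`. A smooth function evaluated along it is an expansion in
these three quantities; joint smoothness in them replaces estimates on the logarithmic terms. -/
noncomputable def rpowLogCurve (ν y : ℝ) : ℝ × ℝ × ℝ := (y, y ^ ν, y ^ ν * Real.log y)

theorem tendsto_rpowLogCurve {ν : ℝ} (hν : 0 < ν) :
    Tendsto (rpowLogCurve ν) (𝓝[>] 0) (𝓝 0) := by
  have hpow : Tendsto (fun y : ℝ => y ^ ν) (𝓝[>] 0) (𝓝 0) := by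
    simpa [Real.zero_rpow hν.ne'] using
      (Real.continuousAt_rpow_const 0 ν (.inr hν.le)).tendsto.mono_left nhdsWithin_le_nhds
  refine (tendsto_id'.2 nhdsWithin_le_nhds).prodMk_nhds (hpow.prodMk_nhds ?_)
  simpa only [mul_comm] using tendsto_log_mul_rpow_nhdsGT_zero hν

theorem rpowLogCurve_div {y s : ℝ} (hy : 0 < y) (hs : 0 < s) (ν : ℝ) :
    rpowLogCurve ν (y / s)
      = (y / s, s ^ (-ν) * y ^ ν, s ^ (-ν) * (y ^ ν * Real.log y - y ^ ν * Real.log s)) := by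
  rw [rpowLogCurve, Real.div_rpow hy.le hs.le, Real.log_div hy.ne' hs.ne', Real.rpow_neg hs.le]
  ring_nf

section BesselKt

variable {α x : ℝ}

theorem rpow_mul_besselKt (hx : 0 < x) (α : ℝ) :
    (x / 2) ^ (2 * α) * besselKt α x = (x / 2) ^ α * besselK α x := by
  rw [besselKt, ← mul_assoc, ← Real.rpow_add (by positivity)]
  ring_nf

theorem rpow_mul_besselKt_of_sin_ne_zero (hx : 0 < x) (hα : Real.sin (α * π) ≠ 0) :
    (x / 2) ^ (2 * α) * besselKt α x
      = π / (2 * Real.sin (α * π)) * (hypZeroOne (1 - α) ((x / 2) ^ 2)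
        - (x / 2) ^ (2 * α) * hypZeroOne (1 + α) ((x / 2) ^ 2)) := by
  have hy : 0 < x / 2 := by positivity
  have hinv : (x / 2) ^ (-α) * (x / 2) ^ α = 1 := by rw [← Real.rpow_add hy]; simp
  rw [rpow_mul_besselKt hx, besselK_of_sin_ne_zero hx hα, besselI_eq_rpow_mul_hypZeroOne hx,
    besselI_eq_rpow_mul_hypZeroOne hx, neg_add_eq_sub, add_comm α, two_mul α, Real.rpow_add hy]
  linear_combination π / (2 * Real.sin (α * π)) * hypZeroOne (1 - α) ((x / 2) ^ 2) * hinv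

theorem rpow_mul_besselKt_natCast (hx : 0 < x) (n : ℕ) :
    (x / 2) ^ (2 * n : ℝ) * besselKt n x
      = (-1) ^ (n + 1) / 2 * (hypZeroOneDeriv (1 - n) ((x / 2) ^ 2)
        + (x / 2) ^ (2 * n : ℝ) * hypZeroOneDeriv (1 + n) ((x / 2) ^ 2)
        + (x / 2) ^ (2 * n : ℝ) * Real.log (x / 2) * (2 * hypZeroOne (1 + n) ((x / 2) ^ 2))) := by
  have hy : 0 < x / 2 := by positivity
  have hinv : (x / 2) ^ (n : ℝ) * (x / 2) ^ (-n : ℝ) = 1 := by rw [← Real.rpow_add hy]; simp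
  rw [rpow_mul_besselKt hx, besselK_natCast hx, two_mul (n : ℝ), Real.rpow_add hy]
  linear_combination (-1) ^ (n + 1) / 2 * hypZeroOneDeriv (1 - n) ((x / 2) ^ 2) * hinv

theorem exists_besselKt_expansion_of_sin_ne_zero (hα : Real.sin (α * π) ≠ 0) :
    ∃ h : ℝ × ℝ × ℝ → ℝ, ContDiff ℝ ω h ∧ h 0 = Real.Gamma α / 2 ∧
      ∀ x, 0 < x → (x / 2) ^ (2 * α) * besselKt α x = h (rpowLogCurve (2 * α) (x / 2)) := by
  have hP (s : ℝ) : ContDiff ℝ ω (hypZeroOne s) := contDiff_hypZeroOne s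
  refine ⟨fun p => π / (2 * Real.sin (α * π))
    * (hypZeroOne (1 - α) (p.1 ^ 2) - p.2.1 * hypZeroOne (1 + α) (p.1 ^ 2)), by fun_prop, ?_,
    fun x hx => rpow_mul_besselKt_of_sin_ne_zero hx hα⟩
  have hreflection := Real.Gamma_mul_Gamma_one_sub α
  rw [mul_comm π] at hreflection
  have hne : Real.Gamma (1 - α) ≠ 0 := right_ne_zero_of_mul <|
    hreflection.trans_ne (div_ne_zero Real.pi_ne_zero hα)
  simp only [Prod.fst_zero, Prod.snd_zero, zero_pow two_ne_zero, zero_mul, sub_zero]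
  rw [hypZeroOne_zero, rGamma, mul_comm 2, ← div_div, ← hreflection]
  field_simp

theorem exists_besselKt_expansion_natCast {n : ℕ} (hn : n ≠ 0) :
    ∃ h : ℝ × ℝ × ℝ → ℝ, ContDiff ℝ ω h ∧ h 0 = Real.Gamma n / 2 ∧
      ∀ x, 0 < x → (x / 2) ^ (2 * n : ℝ) * besselKt n x = h (rpowLogCurve (2 * n) (x / 2)) := by
  have hP (s : ℝ) : ContDiff ℝ ω (hypZeroOne s) := contDiff_hypZeroOne s
  have hQ (s : ℝ) : ContDiff ℝ ω (hypZeroOneDeriv s) := contDiff_hypZeroOneDeriv s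
  refine ⟨fun p => (-1) ^ (n + 1) / 2 * (hypZeroOneDeriv (1 - n) (p.1 ^ 2)
    + p.2.1 * hypZeroOneDeriv (1 + n) (p.1 ^ 2) + p.2.2 * (2 * hypZeroOne (1 + n) (p.1 ^ 2))),
    by fun_prop, ?_, fun x hx => rpow_mul_besselKt_natCast hx n⟩
  obtain ⟨k, rfl⟩ := Nat.exists_eq_add_one_of_ne_zero hn
  have hk : 1 - ((k + 1 : ℕ) : ℝ) = -k := by push_cast; ring
  have hsign : (-1 : ℝ) ^ (k + 1 + 1) * (-1) ^ k = 1 := by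
    rw [← pow_add]; exact Even.neg_one_pow ⟨k + 1, by ring⟩
  simp only [Prod.fst_zero, Prod.snd_zero, zero_pow two_ne_zero, zero_mul, add_zero]
  rw [hypZeroOneDeriv_zero, hk, deriv_rGamma_neg_natCast, Nat.cast_add_one,
    Real.Gamma_nat_eq_factorial]
  linear_combination (k ! : ℝ) / 2 * hsign

theorem exists_besselKt_expansion (hα : 0 < α) :
    ∃ h : ℝ × ℝ × ℝ → ℝ, ContDiff ℝ ω h ∧ h 0 = Real.Gamma α / 2 ∧
      ∀ x, 0 < x → (x / 2) ^ (2 * α) * besselKt α x = h (rpowLogCurve (2 * α) (x / 2)) := by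
  by_cases hsin : Real.sin (α * π) = 0
  · obtain ⟨k, hk⟩ := Real.sin_eq_zero_iff.1 hsin
    obtain rfl : (k : ℝ) = α := mul_right_cancel₀ Real.pi_ne_zero hk
    lift k to ℕ using by exact_mod_cast hα.le
    exact exists_besselKt_expansion_natCast (by rintro rfl; simp at hα)
  · exact exists_besselKt_expansion_of_sin_ne_zero hsin

end BesselKt

section ParametricDerivatives

variable {𝕜 E G : Type*} [NontriviallyNormedField 𝕜] [NormedAddCommGroup E] [NormedSpace 𝕜 E]
  [NormedAddCommGroup G] [NormedSpace 𝕜 G] {F : E → 𝕜 → G} {x₀ : E} {t₀ : 𝕜}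

theorem contDiffAt_uncurry_deriv {m n : WithTop ℕ∞}
    (hF : ContDiffAt 𝕜 n (uncurry F) (x₀, t₀)) (hmn : m + 1 ≤ n) :
    ContDiffAt 𝕜 m (uncurry fun x => deriv (F x)) (x₀, t₀) :=
  have hF' : ContDiffAt 𝕜 n (uncurry fun p : E × 𝕜 => F p.1) ((x₀, t₀), t₀) :=
    hF.comp ((x₀, t₀), t₀) (contDiffAt_fst.fst.prodMk contDiffAt_snd)
  (hF'.fderiv contDiffAt_snd hmn).clm_apply contDiffAt_const

theorem continuousAt_iteratedDeriv_of_contDiffAt_uncurry {j : ℕ}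
    (hF : ContDiffAt 𝕜 j (uncurry F) (x₀, t₀)) :
    ContinuousAt (fun x => iteratedDeriv j (F x) t₀) x₀ := by
  induction j generalizing F with
  | zero =>
    simp only [iteratedDeriv_zero]
    exact hF.continuousAt.comp (x := x₀) (f := fun x => (x, t₀)) (by fun_prop)
  | succ j ih =>
    simp only [iteratedDeriv_succ']
    exact ih (contDiffAt_uncurry_deriv hF le_rfl)

end ParametricDerivatives

theorem iteratedDeriv_one_sub_rpow_neg_zero (a : ℝ) (j : ℕ) :
    iteratedDeriv j (fun t : ℝ => (1 - t) ^ (-a)) 0 = (ascPochhammer ℝ j).eval a := by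
  rw [iteratedDeriv_comp_const_sub (f := fun t : ℝ => t ^ (-a)), iteratedDeriv_eq_iterate]
  simp only [Real.iter_deriv_rpow_const, sub_zero, Real.one_rpow, mul_one, smul_eq_mul]
  rw [← ascPochhammer_eval_neg_eq_descPochhammer, neg_neg]

theorem Gamma_natCast_add_div_Gamma {a : ℝ} (ha : ∀ n : ℕ, a ≠ -n) (j : ℕ) :
    Real.Gamma (j + a) / Real.Gamma a = (ascPochhammer ℝ j).eval a := by
  induction j with
  | zero => simp [Real.Gamma_ne_zero ha]
  | succ j ih =>
    have hne : j + a ≠ 0 := fun h => ha j (eq_neg_of_add_eq_zero_right h)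
    rw [Nat.cast_add_one, add_right_comm, Real.Gamma_add_one hne, mul_div_assoc, ih,
      ascPochhammer_succ_eval]
    ring

theorem rpow_mul_genFun {x t : ℝ} (hx : 0 < x) (ht : t < 1) (μ ν : ℝ) :
    (x / 2) ^ ν * genFun μ ν t x
      = (x / 2 / (1 - t)) ^ ν * besselKt (ν / 2) (x / (1 - t))
        * hypZeroOne (μ / 2 + 1) ((t * (x / 2) / (1 - t)) ^ 2)
        * (1 - t) ^ (-((μ - ν + 2) / 2)) := by
  have ht' : 0 < 1 - t := sub_pos.2 ht
  have hexp : (1 - t) ^ (-((μ - ν + 2) / 2)) = (1 - t) ^ (-(μ + ν + 2) / 2) * (1 - t) ^ ν := by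
    rw [← Real.rpow_add ht']
    ring_nf
  rw [genFun, besselIt_eq_hypZeroOne, hexp, Real.div_rpow (half_pos hx).le ht'.le,
    div_right_comm, ← mul_div_assoc t]
  field_simp

theorem exists_genFun_expansion (μ : ℝ) {ν : ℝ} (hν : 0 < ν) :
    ∃ H : ℝ × ℝ × ℝ → ℝ → ℝ, ContDiffAt ℝ ω (uncurry H) (0, 0) ∧
      (∀ t, H 0 t = Real.Gamma (ν / 2) / 2 * rGamma (μ / 2 + 1)
        * (1 - t) ^ (-((μ - ν + 2) / 2))) ∧
      ∀ x, 0 < x → ∀ t < 1, (x / 2) ^ ν * genFun μ ν t x = H (rpowLogCurve ν (x / 2)) t := by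
  obtain ⟨h, hsmooth, hzero, hK⟩ := exists_besselKt_expansion (half_pos hν)
  simp only [mul_div_cancel₀ ν two_ne_zero] at hK
  have hP : ContDiff ℝ ω (hypZeroOne (μ / 2 + 1)) := contDiff_hypZeroOne _
  refine ⟨fun p t => h (p.1 / (1 - t), (1 - t) ^ (-ν) * p.2.1,
      (1 - t) ^ (-ν) * (p.2.2 - p.2.1 * Real.log (1 - t)))
    * hypZeroOne (μ / 2 + 1) ((t * p.1 / (1 - t)) ^ 2) * (1 - t) ^ (-((μ - ν + 2) / 2)),
    ?_, fun t => ?_, fun x hx t ht => ?_⟩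
  · simp only [uncurry_def]
    fun_prop (disch := simp)
  · simp only [Prod.fst_zero, Prod.snd_zero, mul_zero, zero_mul, sub_zero, zero_div,
      zero_pow two_ne_zero, hypZeroOne_zero, Prod.mk_zero_zero, hzero]
  · rw [rpow_mul_genFun hx ht, div_right_comm, hK _ (div_pos hx (sub_pos.2 ht)),
      div_right_comm x, rpowLogCurve_div (half_pos hx) (sub_pos.2 ht)]
    rfl

theorem tendsto_rpow_mul_LambdaF (μ : ℝ) {ν : ℝ} (hν : 0 < ν) (j : ℕ) :
    Tendsto (fun x => x ^ ν * LambdaF μ ν j x) (𝓝[>] 0)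
      (𝓝 (2 ^ ν / j ! * (Real.Gamma (ν / 2) / 2 * rGamma (μ / 2 + 1)
        * (ascPochhammer ℝ j).eval ((μ - ν + 2) / 2)))) := by
  obtain ⟨H, hsmooth, hzero, hgenFun⟩ := exists_genFun_expansion μ hν
  have hderiv : iteratedDeriv j (H 0) 0 = Real.Gamma (ν / 2) / 2 * rGamma (μ / 2 + 1)
      * (ascPochhammer ℝ j).eval ((μ - ν + 2) / 2) := by
    rw [funext hzero, iteratedDeriv_const_mul_field, iteratedDeriv_one_sub_rpow_neg_zero]
  have hhalf : Tendsto (fun x : ℝ => x / 2) (𝓝[>] 0) (𝓝[>] 0) :=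
    tendsto_nhdsWithin_iff.2 ⟨by simpa using (tendsto_nhdsWithin_of_tendsto_nhds
      (tendsto_id (x := 𝓝 (0 : ℝ)))).div_const 2,
      eventually_mem_nhdsWithin.mono fun _ hx => half_pos (mem_Ioi.1 hx)⟩
  have hlim := (continuousAt_iteratedDeriv_of_contDiffAt_uncurry (j := j)
    (hsmooth.of_le le_top)).tendsto.comp ((tendsto_rpowLogCurve hν).comp hhalf)
  rw [← hderiv]
  refine (hlim.const_mul _).congr' ?_
  filter_upwards [self_mem_nhdsWithin] with x hx
  have hx : 0 < x := hx
  have hlocal : H (rpowLogCurve ν (x / 2)) =ᶠ[𝓝 0] fun t => (x / 2) ^ ν * genFun μ ν t x := by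
    filter_upwards [Iio_mem_nhds one_pos] with t ht using (hgenFun x hx t ht).symm
  rw [comp_apply, comp_apply, hlocal.iteratedDeriv_eq, iteratedDeriv_const_mul_field, LambdaF,
    Real.div_rpow hx.le two_pos.le]
  field_simp

theorem lambda_asymptotics_nu_pos_general {μ ν : ℝ} (hν : 0 < ν) (hμν : ν < μ + 2) (j : ℕ) :
    Tendsto (fun x => x ^ ν * LambdaF μ ν j x) (𝓝[>] 0)
      (𝓝 (2 ^ (ν - 1) * Real.Gamma (ν / 2) * Real.Gamma (j + (μ - ν + 2) / 2)
        / (j ! * Real.Gamma ((μ + 2) / 2) * Real.Gamma ((μ - ν + 2) / 2)))) := by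
  have hne : ∀ n : ℕ, (μ - ν + 2) / 2 ≠ -n := fun n => by
    linarith [n.cast_nonneg (α := ℝ)]
  convert tendsto_rpow_mul_LambdaF μ hν j using 2
  rw [← Gamma_natCast_add_div_Gamma hne, rGamma, add_div, div_self two_ne_zero,
    Real.rpow_sub_one two_ne_zero]
  field_simp

/-- **Small-`x` asymptotics of `Λ_j^{μ,ν}` for `ν > 0`.** -/
theorem lambda_asymptotics_nu_pos (μ ν : ℤ) (hcond : IntCond μ ν) (hν : 0 < ν) (j : ℕ) :
    Filter.Tendsto (fun x : ℝ => x ^ (ν : ℝ) * LambdaF μ ν j x)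
      (nhdsWithin 0 (Set.Ioi 0))
      (nhds ((2 : ℝ) ^ ((ν : ℝ) - 1) * Real.Gamma ((ν : ℝ) / 2)
        * Real.Gamma (j + ((μ : ℝ) - ν + 2) / 2)
        / (j.factorial * Real.Gamma (((μ : ℝ) + 2) / 2)
            * Real.Gamma (((μ : ℝ) - ν + 2) / 2)))) :=
  lambda_asymptotics_nu_pos_general (mod_cast hν)
    (by exact_mod_cast (by linarith [hcond.2.1] : ν < μ + 2)) j
end
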